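/- arXiv:2603.00286 — 2 statements merged into one kernel-verified Lean document; each statement's English description precedes it below -/
import Mathlib

section
/- Let C ⊂ ℝ^{n+d} be a convex body, S = C ∩ (ℤⁿ × ℝ^d), and K = proj_{ℝⁿ}(C). Suppose z₀ + k·B∞ⁿ ⊆ K for some z₀ ∈ ℝⁿ and k ≥ (3e/2)(n+d). Then there exists y* ∈ S such that for every closed halfspace H ⊆ ℝ^{n+d} with y* ∈ H, H_d(S ∩ H) ≥ (1/e − 3(n+d)/(2k)) · H_d(S). -/
open MeasureTheory Set
open scoped ENNReal

/-- The mixed-integer volume `H_d(A) = Σ_{z ∈ ℤⁿ} vol_d(A_z)`. -/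
noncomputable def mixVol (n d : ℕ) (A : Set ((Fin n → ℝ) × (Fin d → ℝ))) : ℝ≥0∞ :=
  ∑' z : Fin n → ℤ, volume {x : Fin d → ℝ | ((fun i => (z i : ℝ)), x) ∈ A}

/-- The mixed-integer lattice `ℤⁿ × ℝ^d` as a subset of `ℝⁿ × ℝ^d`. -/
def mixLattice (n d : ℕ) : Set ((Fin n → ℝ) × (Fin d → ℝ)) :=
  {p | ∃ z : Fin n → ℤ, p.1 = fun i => (z i : ℝ)}

/-- The standard bilinear pairing on `ℝⁿ × ℝ^d`. -/
def dotP (n d : ℕ) (a y : (Fin n → ℝ) × (Fin d → ℝ)) : ℝ :=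
  (∑ i, a.1 i * y.1 i) + ∑ j, a.2 j * y.2 j

/-- The mixed-integer halfspace depth of a point `y` with respect to `S`:
the infimum of `H_d(S ∩ H)` over closed halfspaces `H` containing `y`. -/
noncomputable def depth (n d : ℕ) (S : Set ((Fin n → ℝ) × (Fin d → ℝ)))
    (y : (Fin n → ℝ) × (Fin d → ℝ)) : ℝ≥0∞ :=
  ⨅ (a : (Fin n → ℝ) × (Fin d → ℝ)) (c : ℝ) (_ : a ≠ 0) (_ : c ≤ dotP n d a y),
    mixVol n d (S ∩ {u | c ≤ dotP n d a u})


section helpers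
open scoped Pointwise

lemma bm1_compact (A B M : Set ℝ) (hA : IsCompact A) (hB : IsCompact B) (hA0 : A.Nonempty)
    (hB0 : B.Nonempty) (h : ∀ a ∈ A, ∀ b ∈ B, a + b ∈ M) :
    volume A + volume B ≤ volume M := by
  obtain ⟨a, ha, ha'⟩ := hA.exists_isGreatest hA0
  obtain ⟨b, hb, hb'⟩ := hB.exists_isLeast hB0
  have h1 : volume ((fun x => b + x) '' A) = volume A := by
    rw [Set.image_add_left, measure_preimage_add]
  have h2 : volume ((fun x => a + x) '' B) = volume B := by
    rw [Set.image_add_left, measure_preimage_add]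
  rw [← h1, ← h2, ← measure_union₀]
  · apply measure_mono
    rintro x (⟨y, hy, rfl⟩ | ⟨y, hy, rfl⟩)
    · simpa [add_comm] using h _ hy _ hb
    · exact h _ ha _ hy
  · exact (hB.image (by fun_prop)).measurableSet.nullMeasurableSet
  · refine measure_mono_null (t := {a + b}) ?_ (by simp)
    rintro x ⟨⟨y, hy, rfl⟩, ⟨w, hw, hw2⟩⟩
    have := ha' hy
    have := hb' hw
    simp only [mem_singleton_iff] at *
    linarith

lemma bm1 (A B M : Set ℝ) (hA : MeasurableSet A) (hB : MeasurableSet B) (hA0 : A.Nonempty)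
    (hB0 : B.Nonempty) (h : ∀ a ∈ A, ∀ b ∈ B, a + b ∈ M) :
    volume A + volume B ≤ volume M := by
  obtain ⟨a0, ha0⟩ := hA0
  obtain ⟨b0, hb0⟩ := hB0
  have key : ∀ K, (K ⊆ A ∧ IsCompact K) → ∀ K', (K' ⊆ B ∧ IsCompact K') →
      volume K + volume K' ≤ volume M := by
    intro K ⟨hK, hKc⟩ K' ⟨hK', hKc'⟩
    calc volume K + volume K' ≤ volume (insert a0 K) + volume (insert b0 K') := by
          gcongr <;> exact subset_insert _ _
      _ ≤ volume M := by
          apply bm1_compact _ _ _ (hKc.insert _) (hKc'.insert _) ⟨a0, by simp⟩ ⟨b0, by simp⟩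
          intro a ha b hb
          exact h a (insert_subset ha0 hK ha) b (insert_subset hb0 hK' hb)
  rw [hA.measure_eq_iSup_isCompact, hB.measure_eq_iSup_isCompact]
  simp_rw [iSup_and']
  exact ENNReal.biSup_add_biSup_le' ⟨∅, by simp⟩ ⟨∅, by simp⟩ key

lemma bm1_weighted (A B M : Set ℝ) (hA : MeasurableSet A) (hB : MeasurableSet B) (hA0 : A.Nonempty)
    (hB0 : B.Nonempty) (l : ℝ) (hl0 : 0 < l) (hl1 : l < 1)
    (h : ∀ a ∈ A, ∀ b ∈ B, (1 - l) * a + l * b ∈ M) :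
    ENNReal.ofReal (1 - l) * volume A + ENNReal.ofReal l * volume B ≤ volume M := by
  have e1 : volume ((1 - l) • A) = ENNReal.ofReal (1 - l) * volume A := by
    rw [Measure.addHaar_smul_of_nonneg _ (by linarith)]; simp
  have e2 : volume (l • B) = ENNReal.ofReal l * volume B := by
    rw [Measure.addHaar_smul_of_nonneg _ (by linarith)]; simp
  rw [← e1, ← e2]
  apply bm1 _ _ _ (hA.const_smul₀ _) (hB.const_smul₀ _) hA0.smul_set hB0.smul_set
  rintro _ ⟨a, ha, rfl⟩ _ ⟨b, hb, rfl⟩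
  exact h a ha b hb

lemma pl_core (f g h : ℝ → ℝ) (hf : Measurable f) (hg : Measurable g) (hh : Measurable h)
    (hf0 : ∀ x, 0 ≤ f x) (hg0 : ∀ x, 0 ≤ g x) (hh0 : ∀ x, 0 ≤ h x)
    (hf1 : ∀ x, f x ≤ 1) (hg1 : ∀ x, g x ≤ 1)
    (hfs : ∀ t < 1, ∃ x, t < f x) (hgs : ∀ t < 1, ∃ x, t < g x)
    (l : ℝ) (hl0 : 0 < l) (hl1 : l < 1)
    (H : ∀ x y, f x ^ (1 - l) * g y ^ l ≤ h ((1 - l) * x + l * y)) :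
    ENNReal.ofReal (1 - l) * (∫⁻ x, ENNReal.ofReal (f x)) +
      ENNReal.ofReal l * (∫⁻ x, ENNReal.ofReal (g x)) ≤ ∫⁻ x, ENNReal.ofReal (h x) := by
  have lc : ∀ f : ℝ → ℝ, Measurable f → (∀ x, 0 ≤ f x) → (∀ x, f x ≤ 1) →
      ∫⁻ x, ENNReal.ofReal (f x) = ∫⁻ t in Ioo (0:ℝ) 1, volume {a | t < f a} := by
    intro f hf hf0 hf1
    rw [lintegral_eq_lintegral_meas_lt _ (Filter.Eventually.of_forall hf0) hf.aemeasurable]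
    rw [← lintegral_indicator measurableSet_Ioi, ← lintegral_indicator measurableSet_Ioo]
    congr 1
    ext t
    by_cases ht0 : 0 < t
    · by_cases ht1 : t < 1
      · simp [ht0, ht1]
      · have : {a | t < f a} = ∅ := by
          ext a
          simp only [mem_ofPred_eq, mem_empty_iff_false, iff_false, not_lt]
          exact (hf1 a).trans (not_lt.1 ht1)
        simp [indicator, this]
    · simp [ht0]
  rw [lc f hf hf0 hf1, lc g hg hg0 hg1,
    lintegral_eq_lintegral_meas_lt _ (Filter.Eventually.of_forall hh0) hh.aemeasurable]
  have mf : ∀ f : ℝ → ℝ, Measurable (fun t => volume {a | t < f a}) := fun f =>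
    Antitone.measurable (fun s t hst => measure_mono (fun a (ha : t < f a) => lt_of_le_of_lt hst ha))
  rw [← lintegral_const_mul _ (mf f), ← lintegral_const_mul _ (mf g),
    ← lintegral_add_left ((mf f).const_mul _)]
  refine le_trans ?_ (lintegral_mono_set (Ioo_subset_Ioi_self (a := (1:ℝ)) (b := 0)))
  apply setLIntegral_mono (mf h)
  rintro t ⟨ht0, ht1⟩
  apply bm1_weighted _ _ _ (measurableSet_lt measurable_const hf)
    (measurableSet_lt measurable_const hg) (hfs t ht1) (hgs t ht1) l hl0 hl1
  intro a ha b hb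
  refine lt_of_lt_of_le ?_ (H a b)
  simp only [mem_ofPred_eq] at ha hb
  calc t = t ^ (1 - l) * t ^ l := by rw [← Real.rpow_add ht0]; simp
    _ < f a ^ (1 - l) * g b ^ l := by
      gcongr

lemma pl1 (f g h : ℝ → ℝ) (hf : Measurable f) (hg : Measurable g) (hh : Measurable h)
    (hf0 : ∀ x, 0 ≤ f x) (hg0 : ∀ x, 0 ≤ g x) (hh0 : ∀ x, 0 ≤ h x)
    (hf1 : BddAbove (range f)) (hg1 : BddAbove (range g))
    (If : Integrable f) (Ig : Integrable g) (Ih : Integrable h)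
    (l : ℝ) (hl0 : 0 < l) (hl1 : l < 1)
    (H : ∀ x y, f x ^ (1 - l) * g y ^ l ≤ h ((1 - l) * x + l * y)) :
    (∫ x, f x) ^ (1 - l) * (∫ x, g x) ^ l ≤ ∫ x, h x := by
  have hl1' : 0 < 1 - l := by linarith
  have Ih0 : 0 ≤ ∫ x, h x := integral_nonneg hh0
  set F := sSup (range f) with hF
  set G := sSup (range g) with hG
  have leF : ∀ x, f x ≤ F := fun x => le_csSup hf1 ⟨x, rfl⟩
  have leG : ∀ x, g x ≤ G := fun x => le_csSup hg1 ⟨x, rfl⟩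
  rcases (hf0 0).trans (leF 0) |>.eq_or_lt with h0 | F0
  · have : f = 0 := by ext x; exact le_antisymm ((leF x).trans h0.symm.le) (hf0 x)
    simp [this, Real.zero_rpow hl1'.ne', Ih0]
  rcases (hg0 0).trans (leG 0) |>.eq_or_lt with h0 | G0
  · have : g = 0 := by ext x; exact le_antisymm ((leG x).trans h0.symm.le) (hg0 x)
    simp [this, Real.zero_rpow hl0.ne', Ih0]
  set c := F ^ (1 - l) * G ^ l with hc
  have c0 : 0 < c := by positivity
  have key := pl_core (fun x => f x / F) (fun x => g x / G) (fun x => h x / c)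
    (hf.div_const _) (hg.div_const _) (hh.div_const _)
    (fun x => div_nonneg (hf0 x) F0.le) (fun x => div_nonneg (hg0 x) G0.le)
    (fun x => div_nonneg (hh0 x) c0.le)
    (fun x => (div_le_one F0).2 (leF x)) (fun x => (div_le_one G0).2 (leG x))
    (by
      intro t ht
      obtain ⟨_, ⟨x, rfl⟩, hx⟩ := exists_lt_of_lt_csSup (range_nonempty f)
        (show t * F < sSup (range f) by rw [← hF]; nlinarith)
      exact ⟨x, (lt_div_iff₀ F0).2 hx⟩)
    (by
      intro t ht
      obtain ⟨_, ⟨x, rfl⟩, hx⟩ := exists_lt_of_lt_csSup (range_nonempty g)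
        (show t * G < sSup (range g) by rw [← hG]; nlinarith)
      exact ⟨x, (lt_div_iff₀ G0).2 hx⟩)
    l hl0 hl1
    (by
      intro x y
      rw [Real.div_rpow (hf0 x) F0.le, Real.div_rpow (hg0 y) G0.le, div_mul_div_comm, ← hc]
      gcongr
      exact H x y)
  rw [← ofReal_integral_eq_lintegral_ofReal (If.div_const _)
      (Filter.Eventually.of_forall fun x => div_nonneg (hf0 x) F0.le),
    ← ofReal_integral_eq_lintegral_ofReal (Ig.div_const _)
      (Filter.Eventually.of_forall fun x => div_nonneg (hg0 x) G0.le),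
    ← ofReal_integral_eq_lintegral_ofReal (Ih.div_const _)
      (Filter.Eventually.of_forall fun x => div_nonneg (hh0 x) c0.le),
    integral_div, integral_div, integral_div] at key
  have If0 : 0 ≤ ∫ x, f x := integral_nonneg hf0
  have Ig0 : 0 ≤ ∫ x, g x := integral_nonneg hg0
  rw [← ENNReal.ofReal_mul hl1'.le, ← ENNReal.ofReal_mul hl0.le,
    ← ENNReal.ofReal_add (by positivity) (by positivity),
    ENNReal.ofReal_le_ofReal_iff (by positivity)] at key
  have am := Real.geom_mean_le_arith_mean2_weighted hl1'.le hl0.le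
    (div_nonneg If0 F0.le) (div_nonneg Ig0 G0.le) (by ring)
  have := am.trans key
  rw [Real.div_rpow If0 F0.le, Real.div_rpow Ig0 G0.le, div_mul_div_comm, ← hc] at this
  exact (div_le_div_iff_of_pos_right c0).1 this

lemma fin_fib (N : ℕ) (A : Set (Fin (N+1) → ℝ)) (hA : MeasurableSet A) :
    (∀ s : ℝ, MeasurableSet {v : Fin N → ℝ | (Fin.cons s v : Fin (N+1) → ℝ) ∈ A}) ∧
    Measurable (fun s : ℝ => volume {v : Fin N → ℝ | (Fin.cons s v : Fin (N+1) → ℝ) ∈ A}) ∧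
    volume A = ∫⁻ s : ℝ, volume {v : Fin N → ℝ | (Fin.cons s v : Fin (N+1) → ℝ) ∈ A} := by
  set e := MeasurableEquiv.piFinSuccAbove (fun _ : Fin (N+1) => ℝ) 0 with he
  have hp : MeasurePreserving e volume volume :=
    volume_preserving_piFinSuccAbove (fun _ : Fin (N+1) => ℝ) 0
  have hA' : MeasurableSet (e.symm ⁻¹' A) := e.symm.measurable hA
  have heq : ∀ s : ℝ, Prod.mk s ⁻¹' (e.symm ⁻¹' A) =
      {v : Fin N → ℝ | (Fin.cons s v : Fin (N+1) → ℝ) ∈ A} := by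
    intro s
    ext v
    simp only [mem_preimage, mem_ofPred_eq]
    have : e.symm (s, v) = (Fin.cons s v : Fin (N+1) → ℝ) := by
      simp [he, MeasurableEquiv.piFinSuccAbove, Fin.insertNthEquiv]
    rw [this]
  refine ⟨fun s => ?_, ?_, ?_⟩
  · rw [← heq]; exact measurable_prodMk_left hA'
  · simp_rw [← heq]; exact measurable_measure_prodMk_left hA'
  · rw [← (hp.symm e).measure_preimage_equiv A, Measure.volume_eq_prod, Measure.prod_apply hA']
    simp_rw [heq]

lemma bm_fin (N : ℕ) : ∀ (A B M : Set (Fin N → ℝ)), MeasurableSet A → MeasurableSet B →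
    MeasurableSet M → Bornology.IsBounded A → Bornology.IsBounded B → Bornology.IsBounded M →
    ∀ l : ℝ, 0 < l → l < 1 → (∀ a ∈ A, ∀ b ∈ B, (1 - l) • a + l • b ∈ M) →
    (volume A).toReal ^ (1 - l) * (volume B).toReal ^ l ≤ (volume M).toReal := by
  induction N with
  | zero =>
    intro A B M _ _ _ _ _ _ l hl0 hl1 h
    have hl1' : 0 < 1 - l := by linarith
    rcases A.eq_empty_or_nonempty with rfl | ⟨a, ha⟩
    · simp [Real.zero_rpow hl1'.ne']
    rcases B.eq_empty_or_nonempty with rfl | ⟨b, hb⟩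
    · simp [Real.zero_rpow hl0.ne']
    have e : ∀ S : Set (Fin 0 → ℝ), ∀ a ∈ S, volume S = 1 := by
      intro S a ha
      have : S = univ := by
        ext x; simp [Subsingleton.elim x a, ha]
      rw [this]
      simp [volume_pi]
    rw [e A a ha, e B b hb, e M _ (h a ha b hb)]
    simp
  | succ N ih =>
    intro A B M hA hB hM bA bB bM l hl0 hl1 h
    have hl1' : 0 < 1 - l := by linarith
    have main : ∀ A : Set (Fin (N+1) → ℝ), MeasurableSet A → Bornology.IsBounded A →
        ∃ f : ℝ → ℝ, (∀ s, f s =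
          (volume {v : Fin N → ℝ | (Fin.cons s v : Fin (N+1) → ℝ) ∈ A}).toReal) ∧
          Measurable f ∧ BddAbove (range f) ∧ Integrable f ∧ ∫ s, f s = (volume A).toReal ∧
          ∀ s, Bornology.IsBounded {v : Fin N → ℝ | (Fin.cons s v : Fin (N+1) → ℝ) ∈ A} := by
      intro A hA bA
      obtain ⟨h1, h2, h3⟩ := fin_fib N A hA
      obtain ⟨R, hR⟩ := bA.subset_closedBall 0
      have sub : ∀ s, {v : Fin N → ℝ | (Fin.cons s v : Fin (N+1) → ℝ) ∈ A} ⊆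
          Metric.closedBall 0 R := by
        intro s v hv
        have := hR hv
        rw [mem_closedBall_zero_iff] at this ⊢
        have hR0 : 0 ≤ R := (norm_nonneg _).trans this
        rw [pi_norm_le_iff_of_nonneg hR0] at this ⊢
        intro i
        simpa using this i.succ
      have fin : ∀ s, volume {v : Fin N → ℝ | (Fin.cons s v : Fin (N+1) → ℝ) ∈ A} < ∞ :=
        fun s => (measure_mono (sub s)).trans_lt measure_closedBall_lt_top
      refine ⟨_, fun s => rfl, h2.ennreal_toReal, ?_, ?_, ?_, ?_⟩
      · refine ⟨(volume (Metric.closedBall (0 : Fin N → ℝ) R)).toReal, ?_⟩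
        rintro _ ⟨s, rfl⟩
        exact ENNReal.toReal_mono measure_closedBall_lt_top.ne (measure_mono (sub s))
      · apply integrable_toReal_of_lintegral_ne_top h2.aemeasurable
        rw [← h3]
        exact bA.measure_lt_top.ne
      · rw [h3, integral_toReal h2.aemeasurable (Filter.Eventually.of_forall fin)]
      · exact fun s => Metric.isBounded_closedBall.subset (sub s)
    obtain ⟨f, f1, f2, f3, f4, f5, f6⟩ := main A hA bA
    obtain ⟨g, g1, g2, g3, g4, g5, g6⟩ := main B hB bB
    obtain ⟨k, k1, k2, k3, k4, k5, k6⟩ := main M hM bM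
    rw [← f5, ← g5, ← k5]
    apply pl1 f g k f2 g2 k2 (fun s => by rw [f1]; positivity) (fun s => by rw [g1]; positivity)
      (fun s => by rw [k1]; positivity) f3 g3 f4 g4 k4 l hl0 hl1
    intro x y
    rw [f1, g1, k1]
    apply ih _ _ _ ((fin_fib N A hA).1 x) ((fin_fib N B hB).1 y) ((fin_fib N M hM).1 _)
      (f6 x) (g6 y) (k6 _) l hl0 hl1
    intro a ha b hb
    have := h _ ha _ hb
    simp only [mem_ofPred_eq]
    convert this using 1
    ext i
    refine Fin.cases ?_ (fun j => ?_) i <;> simp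

/-- Log form of Brunn-Minkowski on the product space. -/
lemma bm_prod (n d : ℕ) (A B M : Set ((Fin n → ℝ) × (Fin d → ℝ))) (hA : IsCompact A)
    (hB : IsCompact B) (hM : IsCompact M) (l : ℝ) (hl0 : 0 < l) (hl1 : l < 1)
    (h : ∀ a ∈ A, ∀ b ∈ B, (1 - l) • a + l • b ∈ M) :
    (volume A).toReal ^ (1 - l) * (volume B).toReal ^ l ≤ (volume M).toReal := by
  set e1 := MeasurableEquiv.sumPiEquivProdPi (fun _ : Fin n ⊕ Fin d => ℝ)
  have p1 : MeasurePreserving e1 volume volume :=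
    volume_measurePreserving_sumPiEquivProdPi (fun _ : Fin n ⊕ Fin d => ℝ)
  set e2 := MeasurableEquiv.piCongrLeft (fun _ : Fin n ⊕ Fin d => ℝ) finSumFinEquiv.symm
  have p2 : MeasurePreserving e2 volume volume :=
    volume_measurePreserving_piCongrLeft (fun _ : Fin n ⊕ Fin d => ℝ) finSumFinEquiv.symm
  set e := e2.trans e1
  have p : MeasurePreserving e volume volume := p1.comp p2
  let L : (Fin (n + d) → ℝ) → ((Fin n → ℝ) × (Fin d → ℝ)) := fun v =>
    (fun i => v (finSumFinEquiv (Sum.inl i)), fun j => v (finSumFinEquiv (Sum.inr j)))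
  have eL : ∀ v, e v = L v := by
    intro v
    have e2a : ∀ s, e2 v s = v (finSumFinEquiv s) := by
      intro s
      have := Equiv.piCongrLeft_apply_apply (fun _ : Fin n ⊕ Fin d => ℝ) finSumFinEquiv.symm v
        (finSumFinEquiv s)
      rw [Equiv.symm_apply_apply] at this
      exact this
    refine Prod.ext ?_ ?_
    · ext i; exact e2a (Sum.inl i)
    · ext i; exact e2a (Sum.inr i)
  let L' : ((Fin n → ℝ) × (Fin d → ℝ)) → (Fin (n + d) → ℝ) := fun p i =>
    Sum.elim p.1 p.2 (finSumFinEquiv.symm i)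
  have LL' : ∀ v, L' (L v) = v := by
    intro v
    ext i
    obtain ⟨j, rfl⟩ := finSumFinEquiv.surjective i
    rcases j with j | j <;> simp [L, L']
  have cL' : Continuous L' := by
    apply continuous_pi
    intro i
    obtain ⟨j, rfl⟩ := finSumFinEquiv.surjective i
    rcases j with j | j <;> simp only [L', Equiv.symm_apply_apply, Sum.elim_inl, Sum.elim_inr] <;> fun_prop
  have bd : ∀ S, IsCompact S → Bornology.IsBounded (e ⁻¹' S) := by
    intro S hS
    apply (hS.image cL').isBounded.subset
    intro v hv
    exact ⟨L v, eL v ▸ hv, LL' v⟩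
  have ms : ∀ S, IsCompact S → MeasurableSet (e ⁻¹' S) := fun S hS =>
    e.measurable hS.measurableSet
  rw [← p.measure_preimage_equiv A, ← p.measure_preimage_equiv B, ← p.measure_preimage_equiv M]
  apply bm_fin (n + d) _ _ _ (ms A hA) (ms B hB) (ms M hM) (bd A hA) (bd B hB) (bd M hM) l hl0 hl1
  intro a ha b hb
  have := h _ ha _ hb
  rw [eL, eL] at this
  rw [mem_preimage, eL]
  exact this

lemma grun1d (G : ℝ → ℝ) (W t0 : ℝ) (ht0 : 0 ≤ t0) (htW : t0 < W)
    (hanti : Antitone G) (hG1 : ∀ t, G t ≤ 1) (hG0 : G 0 = 1) (hpos : ∀ t < W, 0 < G t)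
    (hlc : ∀ s < W, ∀ t < W, ∀ l : ℝ, 0 < l → l < 1 →
      G s ^ (1 - l) * G t ^ l ≤ G ((1 - l) * s + l * t))
    (hint : t0 = ∫ t in (0:ℝ)..W, G t) : Real.exp (-1) ≤ G t0 := by
  have p0 := hpos t0 htW
  have conv : ConvexOn ℝ (Iio W) (fun t => - Real.log (G t)) := by
    rw [convexOn_iff_forall_pos]
    refine ⟨convex_Iio W, ?_⟩
    intro x hx y hy a b ha hb hab
    have ha' : a = 1 - b := by linarith
    subst ha'
    have h1 := hlc x hx y hy b hb (by linarith)
    have gx := hpos x hx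
    have gy := hpos y hy
    have h2 := Real.log_le_log (by positivity) h1
    rw [Real.log_mul (by positivity) (by positivity), Real.log_rpow gx, Real.log_rpow gy] at h2
    simp only [smul_eq_mul]
    linarith
  have hmem : t0 ∈ interior (Iio W) := by rw [interior_Iio]; exact htW
  obtain ⟨σ, hσ⟩ : ∃ σ : ℝ, ∀ t < W, G t ≤ G t0 * Real.exp (-σ * (t - t0)) := by
    refine ⟨derivWithin (fun t => - Real.log (G t)) (Ioi t0) t0, ?_⟩
    set σ := derivWithin (fun t => - Real.log (G t)) (Ioi t0) t0 with hσ
    intro t ht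
    have key : Real.log (G t) ≤ Real.log (G t0) + -σ * (t - t0) := by
      rcases lt_trichotomy t t0 with h | h | h
      · have h1 := conv.slope_le_leftDeriv_of_mem_interior ht hmem h
        have h2 := conv.leftDeriv_le_rightDeriv_of_mem_interior hmem
        have h3 := h1.trans h2
        rw [← hσ, slope_def_field, div_le_iff₀ (by linarith)] at h3
        linarith
      · simp [h]
      · have h1 := conv.rightDeriv_le_slope_of_mem_interior hmem ht h
        rw [← hσ, slope_def_field, le_div_iff₀ (by linarith)] at h1
        linarith
    have := Real.exp_le_exp.2 key
    rwa [Real.exp_add, Real.exp_log (hpos t ht), Real.exp_log p0] at this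
  have h0 := hσ 0 (by linarith)
  rw [hG0] at h0
  set p := G t0 with hp
  rcases le_or_gt σ 0 with hs | hs
  · have : Real.exp (-σ * (0 - t0)) ≤ 1 := by
      rw [Real.exp_le_one_iff]; nlinarith
    have h1 : 1 ≤ p := by nlinarith
    exact (Real.exp_le_one_iff.2 (by norm_num)).trans h1
  have hlp : Real.log p ≤ 0 := Real.log_nonpos p0.le (hG1 t0)
  have hl0 : 0 ≤ Real.log p + -σ * (0 - t0) := by
    have := Real.log_le_log one_pos h0
    rwa [Real.log_one, Real.log_mul p0.ne' (Real.exp_pos _).ne', Real.log_exp] at this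
  set τ := t0 + Real.log p / σ with hτ
  have τ0 : 0 ≤ τ := by
    have : τ = (Real.log p + -σ * (0 - t0)) / σ := by rw [hτ]; field_simp; ring
    rw [this]; positivity
  have τt : τ ≤ t0 := by
    have : Real.log p / σ ≤ 0 := div_nonpos_of_nonpos_of_nonneg hlp hs.le
    linarith
  have ii : ∀ a b, IntervalIntegrable G volume a b := fun a b => hanti.intervalIntegrable
  rw [← intervalIntegral.integral_add_adjacent_intervals (ii 0 τ) (ii τ W)] at hint
  have i1 : ∫ t in (0:ℝ)..τ, G t ≤ ∫ t in (0:ℝ)..τ, (1:ℝ) :=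
    intervalIntegral.integral_mono_on τ0 (ii _ _) (by simp) (fun t _ => hG1 t)
  have i2 : ∫ t in τ..W, G t ≤ ∫ t in τ..W, p * Real.exp (-σ * (t - t0)) := by
    apply intervalIntegral.integral_mono_on_of_le_Ioo (by linarith) (ii _ _)
    · apply Continuous.intervalIntegrable; fun_prop
    · intro t ht; exact hσ t ht.2
  have i3 : ∫ t in τ..W, p * Real.exp (-σ * (t - t0)) =
      -(p / σ) * Real.exp (-σ * (W - t0)) - -(p / σ) * Real.exp (-σ * (τ - t0)) := by
    apply intervalIntegral.integral_eq_sub_of_hasDerivAt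
      (f := fun t => -(p / σ) * Real.exp (-σ * (t - t0)))
    · intro t _
      have h1 : HasDerivAt (fun t => -σ * (t - t0)) (-σ * 1) t :=
        ((hasDerivAt_id t).sub_const t0).const_mul (-σ)
      have := (h1.exp).const_mul (-(p / σ))
      refine this.congr_deriv ?_
      have hs' := hs.ne'
      field_simp
    · apply Continuous.intervalIntegrable; fun_prop
  have i4 : Real.exp (-σ * (τ - t0)) = 1 / p := by
    have : -σ * (τ - t0) = - Real.log p := by rw [hτ]; field_simp; ring
    rw [this, Real.exp_neg, Real.exp_log p0, one_div]
  rw [i3, i4] at i2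
  have i5 : 0 < (p / σ) * Real.exp (-σ * (W - t0)) := by positivity
  have i6 : -(p / σ) * (1 / p) = - (1 / σ) := by field_simp
  rw [i6] at i2
  simp only [intervalIntegral.integral_const, sub_zero, smul_eq_mul, mul_one] at i1
  have : t0 ≤ τ + 1 / σ := by linarith
  have h7 : 0 ≤ (Real.log p + 1) / σ := by rw [add_div]; linarith
  have h8 : 0 ≤ Real.log p + 1 := by
    by_contra hc
    push Not at hc
    exact absurd h7 (not_le.2 (div_neg_of_neg_of_pos hc hs))
  rw [← Real.exp_log p0]
  exact Real.exp_le_exp.2 (by linarith)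

lemma homoth {E : Type*} [NormedAddCommGroup E] [NormedSpace ℝ E] [MeasurableSpace E] [BorelSpace E]
    [FiniteDimensional ℝ E] (μ : Measure E) [μ.IsAddHaarMeasure] (A D : Set E) (r : ℝ) (hr : 0 ≤ r)
    (v : E) (h : ∀ x ∈ A, v + r • x ∈ D) :
    ENNReal.ofReal (r ^ Module.finrank ℝ E) * μ A ≤ μ D := by
  rw [← Measure.addHaar_smul_of_nonneg μ hr A, ← measure_preimage_add μ (-v) (r • A)]
  apply measure_mono
  rintro x ⟨y, hy, hxy⟩
  have := h y hy
  simp only at hxy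
  rw [hxy] at this
  simpa using this

lemma haar_prod (n d : ℕ) :
    (volume : Measure ((Fin n → ℝ) × (Fin d → ℝ))).IsAddHaarMeasure :=
  Measure.prod.instIsAddHaarMeasure _ _

lemma homoth_real (n d : ℕ) (A D : Set ((Fin n → ℝ) × (Fin d → ℝ))) (r : ℝ) (hr : 0 ≤ r)
    (v : (Fin n → ℝ) × (Fin d → ℝ)) (hD : volume D ≠ ∞) (h : ∀ x ∈ A, v + r • x ∈ D) :
    r ^ (n + d) * (volume A).toReal ≤ (volume D).toReal := by
  have := haar_prod n d
  have := homoth volume A D r hr v h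
  have h2 := ENNReal.toReal_mono hD this
  rw [ENNReal.toReal_mul, ENNReal.toReal_ofReal (by positivity)] at h2
  simpa using h2

lemma lt_of_nonzero (n d : ℕ) (C : Set ((Fin n → ℝ) × (Fin d → ℝ)))
    (hint : (interior C).Nonempty) (f : ((Fin n → ℝ) × (Fin d → ℝ)) →L[ℝ] ℝ) (hf : f ≠ 0)
    (m M : ℝ) (hm : ∀ x ∈ C, m ≤ f x) (hM : ∀ x ∈ C, f x ≤ M) : m < M := by
  by_contra hc
  push Not at hc
  have hconst : ∀ x ∈ C, f x = m := fun x hx => le_antisymm ((hM x hx).trans hc) (hm x hx)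
  obtain ⟨x, hx⟩ := hint
  apply hf
  refine ContinuousLinearMap.ext fun w => ?_
  have hcont : Filter.Tendsto (fun e : ℝ => x + e • w) (nhds 0) (nhds x) := by
    have : Continuous (fun e : ℝ => x + e • w) := by fun_prop
    simpa using this.tendsto 0
  have hev : ∀ᶠ e in nhds (0:ℝ), x + e • w ∈ C := hcont (mem_interior_iff_mem_nhds.1 hx)
  have hev2 : ∀ᶠ e in nhdsWithin (0:ℝ) {0}ᶜ, x + e • w ∈ C ∧ e ∈ ({0}ᶜ : Set ℝ) :=
    (hev.filter_mono nhdsWithin_le_nhds).and self_mem_nhdsWithin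
  obtain ⟨e, he1, he2⟩ := hev2.exists
  have h1 := hconst _ he1
  rw [map_add, map_smul, hconst x (interior_subset hx), smul_eq_mul] at h1
  have h2 : e * f w = 0 := by linarith
  rcases mul_eq_zero.1 h2 with h3 | h3
  · exact absurd h3 he2
  · simpa using h3

lemma depth_cont (n d : ℕ) (hN : 1 ≤ n + d) (C : Set ((Fin n → ℝ) × (Fin d → ℝ)))
    (hconv : Convex ℝ C) (hcomp : IsCompact C) (hint : (interior C).Nonempty) :
    ∃ y ∈ C, ∀ f : ((Fin n → ℝ) × (Fin d → ℝ)) →L[ℝ] ℝ, f ≠ 0 →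
      ∀ p ∈ C, ∀ q ∈ C, (∀ x ∈ C, f p ≤ f x) → (∀ x ∈ C, f x ≤ f q) → ∀ δ : ℝ, 0 ≤ δ →
      (Real.exp (-1) - 2 * (n + d : ℝ) * δ / (f q - f p + δ)) * (volume C).toReal ≤
        (volume (C ∩ {x | f y + δ ≤ f x})).toReal := by
  have := haar_prod n d
  have hC1 : volume C ≠ ∞ := hcomp.measure_lt_top.ne
  have hC0 : volume C ≠ 0 := (Measure.measure_pos_of_nonempty_interior volume hint).ne'
  have hid : IntegrableOn (fun x => x) C volume := continuous_id.continuousOn.integrableOn_compact hcomp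
  have hy : ⨍ x in C, x ∂volume ∈ C := hconv.set_average_mem hcomp.isClosed hC0 hC1
    (ae_restrict_mem hcomp.measurableSet) hid
  refine ⟨_, hy, ?_⟩
  set y := ⨍ x in C, x ∂volume with hydef
  intro f hf p hp q hq hmin hmax δ hδ
  have hmM : f p < f q := lt_of_nonzero n d C hint f hf _ _ hmin hmax
  set m := f p with hm
  set M := f q with hM
  set v := (volume C).toReal with hv
  have v0 : 0 < v := ENNReal.toReal_pos hC0 hC1
  set V : ℝ → ℝ := fun t => (volume (C ∩ {x | t ≤ f x})).toReal with hV
  have fin : ∀ s : Set ((Fin n → ℝ) × (Fin d → ℝ)), volume (C ∩ s) ≠ ∞ := fun s =>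
    ((measure_mono inter_subset_left).trans_lt hcomp.measure_lt_top).ne
  have cmp : ∀ t, IsCompact (C ∩ {x | t ≤ f x}) := fun t =>
    hcomp.inter_right (isClosed_le continuous_const f.continuous)
  have Vanti : Antitone V := fun s t hst => ENNReal.toReal_mono (fin _)
    (measure_mono (inter_subset_inter_right _ fun x (hx : t ≤ f x) => hst.trans hx))
  have Vle : ∀ t, V t ≤ v := fun t => ENNReal.toReal_mono hC1 (measure_mono inter_subset_left)
  have Vm : ∀ t ≤ m, V t = v := by
    intro t ht
    have : C ∩ {x | t ≤ f x} = C := inter_eq_left.2 fun x hx => ht.trans (hmin x hx)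
    simp only [hV, this, hv]
  have V0 : ∀ t, 0 ≤ V t := fun t => ENNReal.toReal_nonneg
  -- homothety towards the top
  have top : ∀ a b r : ℝ, 0 ≤ r → r ≤ 1 → b = M - r * (M - a) → r ^ (n + d) * V a ≤ V b := by
    intro a b r hr0 hr1 hb
    apply homoth_real n d _ _ r hr0 ((1 - r) • q) (fin _)
    rintro x ⟨hx, hxa⟩
    refine ⟨hconv hq hx (by linarith) hr0 (by ring), ?_⟩
    simp only [mem_ofPred_eq, map_add, map_smul, smul_eq_mul, ← hM] at *
    nlinarith
  have bot : ∀ a b r : ℝ, 0 ≤ r → r ≤ 1 → a = m + r * (b - m) →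
      r ^ (n + d) * (volume (C ∩ {x | f x < b})).toReal ≤ (volume (C ∩ {x | f x ≤ a})).toReal := by
    intro a b r hr0 hr1 hb
    apply homoth_real n d _ _ r hr0 ((1 - r) • p) (fin _)
    rintro x ⟨hx, hxa⟩
    refine ⟨hconv hp hx (by linarith) hr0 (by ring), ?_⟩
    simp only [mem_ofPred_eq, map_add, map_smul, smul_eq_mul, ← hm] at *
    nlinarith
  have bot' : ∀ a b r : ℝ, 0 < r → r ≤ 1 → a = m + r * (b - m) →
      r ^ (n + d) * (volume (C ∩ {x | f x < b})).toReal ≤ (volume (C ∩ {x | f x < a})).toReal := by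
    intro a b r hr0 hr1 hb
    apply homoth_real n d _ _ r hr0.le ((1 - r) • p) (fin _)
    rintro x ⟨hx, hxa⟩
    refine ⟨hconv hp hx (by linarith) hr0.le (by ring), ?_⟩
    simp only [mem_ofPred_eq, map_add, map_smul, smul_eq_mul, ← hm] at *
    nlinarith
  have compl : ∀ t, (volume (C ∩ {x | f x < t})).toReal = v - V t := by
    intro t
    have h1 := measureReal_inter_add_sdiff (μ := volume) (s := C)
      (measurableSet_le measurable_const f.continuous.measurable : MeasurableSet {x | t ≤ f x}) hC1
    have h2 : C \ {x | t ≤ f x} = C ∩ {x | f x < t} := by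
      ext x; simp
    rw [h2] at h1
    simp only [Measure.real] at h1
    simp only [hV, hv]
    linarith
  have Vpos : ∀ t < M, 0 < V t := by
    intro t ht
    have h1 := top m (max t m) ((M - max t m) / (M - m))
      (div_nonneg (by simp [ht.le, hmM.le]) (by linarith))
      ((div_le_one (by linarith)).2 (by linarith [le_max_right t m]))
      (by field_simp [sub_ne_zero.2 hmM.ne']; ring)
    rw [Vm m le_rfl] at h1
    have h2 : 0 < (M - max t m) / (M - m) := div_pos (by simp [ht, hmM]) (by linarith)
    exact (by positivity : 0 < ((M - max t m) / (M - m)) ^ (n + d) * v).trans_le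
      (h1.trans (Vanti (le_max_left _ _)))
  have hci : ∀ c : ℝ, Integrable (fun _ => c) (volume.restrict C) := fun c => integrableOn_const hC1
  have hfi : Integrable (fun x => f x) (volume.restrict C) := f.continuous.continuousOn.integrableOn_compact hcomp
  have hmean : ∫ x in C, f x = v * f y := by
    rw [f.integral_comp_comm hid, hydef, setAverage_eq, map_smul, smul_eq_mul, Measure.real, ← hv]
    field_simp
  have hcst : ∀ c : ℝ, ∫ x in C, c = v * c := by
    intro c; simp [Measure.real, hv]
  have t0m : m ≤ f y := hmin y hy
  have t0M : f y < M := by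
    have h1 : 0 < ∫ x in C, (M - f x) := by
      rw [setIntegral_pos_iff_support_of_nonneg_ae]
      · have hb := bot ((m + M) / 2) (M + 1) ((M - m) / 2 / (M + 1 - m))
          (div_nonneg (by linarith) (by linarith)) ((div_le_one (by linarith)).2 (by linarith))
          (by field_simp [show M + 1 - m ≠ 0 by linarith]; ring)
        have h2 : C ∩ {x | f x < M + 1} = C := inter_eq_left.2 fun x hx =>
          lt_of_le_of_lt (hmax x hx) (by linarith)
        rw [h2, ← hv] at hb
        have h3 : 0 < (volume (C ∩ {x | f x ≤ (m + M) / 2})).toReal := by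
          refine lt_of_lt_of_le ?_ hb
          have : 0 < (M - m) / 2 / (M + 1 - m) := div_pos (by linarith) (by linarith)
          positivity
        refine (ENNReal.toReal_pos_iff.1 h3).1.trans_le (measure_mono ?_)
        rintro x ⟨hx, hx2⟩
        refine ⟨?_, hx⟩
        simp only [mem_ofPred_eq, Function.mem_support] at *
        linarith
      · filter_upwards [ae_restrict_mem hcomp.measurableSet] with x hx
        simpa using hmax x hx
      · exact (hci _).sub hfi
    rw [integral_sub (hci _) hfi, hmean, hcst] at h1
    nlinarith
  -- Gruenbaum
  have grun : Real.exp (-1) * v ≤ V (f y) := by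
    have := grun1d (fun t => V (m + t) / v) (M - m) (f y - m) (by linarith) (by linarith)
      (fun s t hst => by
        have := Vanti (add_le_add_right hst m)
        simp only
        gcongr)
      (fun t => (div_le_one v0).2 (Vle _))
      (by simp [Vm m le_rfl, v0.ne'])
      (fun t ht => div_pos (Vpos _ (by linarith)) v0)
      (by
        intro s hs t ht l hl0 hl1
        rw [Real.div_rpow (V0 _) v0.le, Real.div_rpow (V0 _) v0.le, div_mul_div_comm,
          ← Real.rpow_add v0, sub_add_cancel, Real.rpow_one]
        gcongr
        apply bm_prod n d _ _ _ (cmp _) (cmp _) (cmp _) l hl0 hl1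
        rintro a ⟨ha, ha2⟩ b ⟨hb, hb2⟩
        refine ⟨hconv ha hb (by linarith) hl0.le (by ring), ?_⟩
        simp only [mem_ofPred_eq, map_add, map_smul, smul_eq_mul] at *
        nlinarith)
      (by
        rw [intervalIntegral.integral_div, eq_div_iff v0.ne',
          intervalIntegral.integral_of_le (by linarith)]
        have h1 := Integrable.integral_eq_integral_Ioc_meas_le (μ := volume.restrict C)
          (f := fun x => f x - m) (M := M - m) (hfi.sub (hci _))
          (by filter_upwards [ae_restrict_mem hcomp.measurableSet] with x hx
              simpa using hmin x hx)
          (by filter_upwards [ae_restrict_mem hcomp.measurableSet] with x hx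
              simpa using hmax x hx)
        rw [integral_sub hfi (hci _), hmean, hcst] at h1
        rw [sub_mul, mul_comm (f y), mul_comm m, h1]
        congr 1
        ext t
        simp only [hV, Measure.real]
        rw [Measure.restrict_apply (measurableSet_le measurable_const (by fun_prop))]
        congr 2
        ext x
        simp only [mem_inter_iff, mem_ofPred_eq, le_sub_iff_add_le, add_comm m t]
        tauto)
    simp only [add_sub_cancel] at this
    exact (le_div_iff₀ v0).1 this
  -- slab bound
  set a := f y with ha
  set b := a + δ with hb
  have s0 : V b ≤ V a := Vanti (by linarith)
  have hN' : (1:ℝ) ≤ (n + d : ℝ) := by exact_mod_cast hN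
  have e1 : (V a - V b) * (M - a) ≤ (n + d) * δ * V a := by
    rcases le_or_gt b M with hbM | hbM
    · have Ma : 0 < M - a := by linarith
      have h1 := top a b ((M - b) / (M - a)) (div_nonneg (by linarith) Ma.le)
        ((div_le_one Ma).2 (by linarith)) (by field_simp; ring)
      have h2 := one_add_mul_le_pow (a := (M - b) / (M - a) - 1)
        (by have : 0 ≤ (M - b) / (M - a) := div_nonneg (by linarith) Ma.le
            linarith) (n + d)
      have h3 : (M - b) / (M - a) - 1 = - δ / (M - a) := by
        rw [hb]; field_simp; ring
      rw [add_sub_cancel, h3] at h2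
      have h4 := (mul_le_mul_of_nonneg_right h2 (V0 a)).trans h1
      have h5 := mul_le_mul_of_nonneg_right h4 Ma.le
      have h6 : (1 + ((n + d : ℕ) : ℝ) * (-δ / (M - a))) * V a * (M - a) =
        V a * (M - a) - (n + d) * δ * V a := by
        push_cast; field_simp; ring
      linarith
    · have h1 : (V a - V b) * (M - a) ≤ V a * δ :=
        mul_le_mul (by linarith [V0 b]) (by linarith) (by linarith) (V0 a)
      have h2 : V a * δ ≤ (n + d) * (δ * V a) := by
        have := mul_nonneg hδ (V0 a)
        nlinarith
      linarith
  have e2 : (V a - V b) * (b - m) ≤ (n + d) * δ * (v - V b) := by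
    rcases t0m.eq_or_lt with h0 | h0
    · have h1 : (V a - V b) * (b - m) ≤ (v - V b) * δ := by
        have : b - m = δ := by rw [hb, ← h0]; ring
        rw [this]
        gcongr
        exact Vle a
      have h2 : (v - V b) * δ ≤ (n + d) * (δ * (v - V b)) := by
        have := mul_nonneg hδ (sub_nonneg.2 (Vle b))
        nlinarith
      linarith
    · have bm : 0 < b - m := by linarith
      have h1 := bot' a b ((a - m) / (b - m)) (div_pos (by linarith) bm)
        ((div_le_one bm).2 (by linarith)) (by field_simp; ring)
      rw [compl, compl] at h1
      have h2 := one_add_mul_le_pow (a := (a - m) / (b - m) - 1)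
        (by have : 0 ≤ (a - m) / (b - m) := div_nonneg (by linarith) bm.le
            linarith) (n + d)
      have h3 : (a - m) / (b - m) - 1 = - δ / (b - m) := by
        field_simp; rw [hb]; ring
      rw [add_sub_cancel, h3] at h2
      have h4 := (mul_le_mul_of_nonneg_right h2 (sub_nonneg.2 (Vle b))).trans h1
      have h5 := mul_le_mul_of_nonneg_right h4 bm.le
      have h6 : (1 + ((n + d : ℕ) : ℝ) * (-δ / (b - m))) * (v - V b) * (b - m) =
        (v - V b) * (b - m) - (n + d) * δ * (v - V b) := by
        push_cast; field_simp; ring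
      linarith
  have W0 : 0 < M - m + δ := by linarith
  have e3 : (V a - V b) * (M - m + δ) ≤ (n + d) * δ * (2 * v) := by
    have h1 : (V a - V b) * (M - m + δ) = (V a - V b) * (M - a) + (V a - V b) * (b - m) := by
      rw [hb]; ring
    have h2 : (n + d : ℝ) * δ * (V a + (v - V b)) ≤ (n + d : ℝ) * δ * (2 * v) := by
      have := Vle a
      have := V0 b
      gcongr
      linarith
    linarith
  have e4 : V a - V b ≤ 2 * (n + d : ℝ) * δ / (M - m + δ) * v := by
    rw [div_mul_eq_mul_div, le_div_iff₀ W0]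
    linarith
  have : V b = (volume (C ∩ {x | b ≤ f x})).toReal := rfl
  rw [← this]
  linarith

/-- The rounding map `w ↦ ⌊r w + s⌋`. -/
noncomputable def tileMap (n : ℕ) (r : ℝ) (s : Fin n → ℝ) (w : Fin n → ℝ) : Fin n → ℤ :=
  fun i => ⌊r * w i + s i⌋

lemma tile_meas (n : ℕ) (r : ℝ) (s : Fin n → ℝ) : Measurable (tileMap n r s) := by
  apply measurable_pi_lambda
  intro i
  exact Int.measurable_floor.comp (by fun_prop)

lemma tile_vol (n : ℕ) (r : ℝ) (hr : 0 < r) (s : Fin n → ℝ) (z : Fin n → ℤ) :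
    volume (tileMap n r s ⁻¹' {z}) = ENNReal.ofReal (1 / r) ^ n := by
  have : tileMap n r s ⁻¹' {z} =
      Set.pi univ (fun i => Ico (((z i : ℝ) - s i) / r) (((z i : ℝ) + 1 - s i) / r)) := by
    ext w
    simp only [mem_preimage, mem_singleton_iff, mem_univ_pi, mem_Ico, tileMap, funext_iff,
      Int.floor_eq_iff, div_le_iff₀ hr, lt_div_iff₀ hr]
    apply forall_congr'
    intro i
    constructor <;> rintro ⟨h1, h2⟩ <;> constructor <;> linarith
  rw [this, Real.volume_pi_Ico]
  have h2 : ∀ i, ((z i : ℝ) + 1 - s i) / r - ((z i : ℝ) - s i) / r = 1 / r := by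
    intro i; field_simp; ring
  simp [h2]

lemma tile_sum (n d : ℕ) (r : ℝ) (s : Fin n → ℝ) (D : Set ((Fin n → ℝ) × (Fin d → ℝ)))
    (hD : MeasurableSet D) :
    volume D = ∑' z : Fin n → ℤ, ∫⁻ w in tileMap n r s ⁻¹' {z},
      volume {x : Fin d → ℝ | (w, x) ∈ D} := by
  rw [← lintegral_iUnion (fun z => tile_meas n r s (measurableSet_singleton z))]
  · have : ⋃ z, tileMap n r s ⁻¹' {z} = univ := by
      ext w; simp
    rw [this, Measure.restrict_univ, Measure.volume_eq_prod, Measure.prod_apply hD]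
    rfl
  · intro z z' hzz
    exact Disjoint.preimage _ (by simpa using hzz)

lemma fib_meas (n d : ℕ) (D : Set ((Fin n → ℝ) × (Fin d → ℝ))) (hD : MeasurableSet D) :
    Measurable (fun w => volume {x : Fin d → ℝ | (w, x) ∈ D}) :=
  measurable_measure_prodMk_left hD

lemma ofReal_cancel (n : ℕ) (t : ℝ) (ht : 0 < t) :
    ENNReal.ofReal (t ^ n) * ENNReal.ofReal (1 / t) ^ n = 1 := by
  rw [ENNReal.ofReal_pow ht.le, ← mul_pow, ← ENNReal.ofReal_mul ht.le]
  simp [ht.ne']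

lemma upper (n d : ℕ) (C : Set ((Fin n → ℝ) × (Fin d → ℝ))) (hconv : Convex ℝ C)
    (hC : MeasurableSet C) (z₀ : Fin n → ℝ) (k : ℝ)
    (hbox : ∀ u : Fin n → ℝ, (∀ i, |u i - z₀ i| ≤ k) → ∃ g, (u, g) ∈ C)
    (m : ℝ) (hm0 : 0 < m) (hm1 : m < 1) (hmk : (1 - m) / 2 ≤ m * k) :
    ENNReal.ofReal ((1 - m) ^ (n + d)) *
      (∑' z : Fin n → ℤ, volume {x : Fin d → ℝ | ((fun i => (z i : ℝ)), x) ∈ C}) ≤ volume C := by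
  have hm1' : 0 < 1 - m := by linarith
  set s : Fin n → ℝ := fun i => - (m * z₀ i / (1 - m)) + 1 / 2 with hs
  rw [tile_sum n d (1 / (1 - m)) s C hC, ← ENNReal.tsum_mul_left]
  apply ENNReal.tsum_le_tsum
  intro z
  have key : ∀ w ∈ tileMap n (1 / (1 - m)) s ⁻¹' {z},
      ENNReal.ofReal ((1 - m) ^ d) * volume {x : Fin d → ℝ | ((fun i => (z i : ℝ)), x) ∈ C} ≤
        volume {x : Fin d → ℝ | (w, x) ∈ C} := by
    intro w hw
    obtain ⟨g, hg⟩ := hbox (fun i => (w i - (1 - m) * z i) / m) (by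
      intro i
      have h1 := congrFun hw i
      simp only [tileMap, hs, Int.floor_eq_iff] at h1
      have h3 : (1 - m) * (1 / (1 - m) * w i + (-(m * z₀ i / (1 - m)) + 1 / 2)) =
        w i - m * z₀ i + (1 - m) / 2 := by field_simp; ring
      have h4 := mul_le_mul_of_nonneg_left h1.1 hm1'.le
      have h5 := mul_le_mul_of_nonneg_left h1.2.le hm1'.le
      rw [h3] at h4 h5
      have h6 : (w i - (1 - m) * z i) / m - z₀ i = (w i - (1 - m) * z i - m * z₀ i) / m := by
        field_simp
      rw [h6, abs_div, abs_of_pos hm0, div_le_iff₀ hm0, abs_le]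
      constructor <;> linarith)
    have := homoth (volume : Measure (Fin d → ℝ)) {x : Fin d → ℝ | ((fun i => (z i : ℝ)), x) ∈ C}
      {x : Fin d → ℝ | (w, x) ∈ C} (1 - m) hm1'.le (m • g) (by
        intro x hx
        have := hconv hg hx hm0.le hm1'.le (by ring)
        simp only [mem_ofPred_eq]
        convert this using 1
        ext i
        · simp; field_simp; ring
        · simp)
    simpa using this
  calc ENNReal.ofReal ((1 - m) ^ (n + d)) * volume {x : Fin d → ℝ | ((fun i => (z i : ℝ)), x) ∈ C}
      = ∫⁻ w in tileMap n (1 / (1 - m)) s ⁻¹' {z}, ENNReal.ofReal ((1 - m) ^ d) *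
          volume {x : Fin d → ℝ | ((fun i => (z i : ℝ)), x) ∈ C} := by
        rw [setLIntegral_const, tile_vol _ _ (by positivity), one_div_one_div, pow_add,
          ENNReal.ofReal_mul (by positivity), ENNReal.ofReal_pow hm1'.le n]
        ring
    _ ≤ _ := setLIntegral_mono (fib_meas n d C hC) key

lemma lower (n d : ℕ) (C A D : Set ((Fin n → ℝ) × (Fin d → ℝ)))
    (hA : MeasurableSet A) (z₀ : Fin n → ℝ) (k : ℝ)
    (hbox : ∀ u : Fin n → ℝ, (∀ i, |u i - z₀ i| ≤ k) → ∃ g, (u, g) ∈ C)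
    (m : ℝ) (hm0 : 0 < m) (hm1 : m < 1) (hmk : 1 / 2 ≤ m * k)
    (h : ∀ a ∈ A, ∀ c ∈ C, (1 - m) • a + m • c ∈ D) :
    ENNReal.ofReal ((1 - m) ^ (n + d)) * volume A ≤
      (∑' z : Fin n → ℤ, volume {x : Fin d → ℝ | ((fun i => (z i : ℝ)), x) ∈ D}) := by
  have hm1' : 0 < 1 - m := by linarith
  set s : Fin n → ℝ := fun i => m * z₀ i + 1 / 2 with hs
  rw [tile_sum n d (1 - m) s A hA, ← ENNReal.tsum_mul_left]
  apply ENNReal.tsum_le_tsum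
  intro z
  have key : ∀ w ∈ tileMap n (1 - m) s ⁻¹' {z},
      ENNReal.ofReal ((1 - m) ^ d) * volume {x : Fin d → ℝ | (w, x) ∈ A} ≤
        volume {x : Fin d → ℝ | ((fun i => (z i : ℝ)), x) ∈ D} := by
    intro w hw
    obtain ⟨g, hg⟩ := hbox (fun i => (z i - (1 - m) * w i) / m) (by
      intro i
      have h1 := congrFun hw i
      simp only [tileMap, hs, Int.floor_eq_iff] at h1
      have h6 : (z i - (1 - m) * w i) / m - z₀ i = (z i - (1 - m) * w i - m * z₀ i) / m := by
        field_simp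
      rw [h6, abs_div, abs_of_pos hm0, div_le_iff₀ hm0, abs_le]
      constructor <;> linarith)
    have := homoth (volume : Measure (Fin d → ℝ)) {x : Fin d → ℝ | (w, x) ∈ A}
      {x : Fin d → ℝ | ((fun i => (z i : ℝ)), x) ∈ D} (1 - m) hm1'.le (m • g) (by
        intro x hx
        have := h _ hx _ hg
        simp only [mem_ofPred_eq]
        convert this using 1
        ext i
        · simp; field_simp; ring
        · simp; ring)
    simpa using this
  calc ENNReal.ofReal ((1 - m) ^ (n + d)) *
        ∫⁻ w in tileMap n (1 - m) s ⁻¹' {z}, volume {x : Fin d → ℝ | (w, x) ∈ A}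
      = ENNReal.ofReal ((1 - m) ^ n) * ∫⁻ w in tileMap n (1 - m) s ⁻¹' {z},
          ENNReal.ofReal ((1 - m) ^ d) * volume {x : Fin d → ℝ | (w, x) ∈ A} := by
        rw [lintegral_const_mul _ (fib_meas n d A hA), pow_add, ENNReal.ofReal_mul (by positivity),
          mul_assoc]
    _ ≤ ENNReal.ofReal ((1 - m) ^ n) * ∫⁻ w in tileMap n (1 - m) s ⁻¹' {z},
          volume {x : Fin d → ℝ | ((fun i => (z i : ℝ)), x) ∈ D} := by
        gcongr 1
        exact setLIntegral_mono measurable_const key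
    _ = volume {x : Fin d → ℝ | ((fun i => (z i : ℝ)), x) ∈ D} := by
        rw [setLIntegral_const, tile_vol _ _ hm1', mul_left_comm, ofReal_cancel _ _ hm1', mul_one]

lemma numeric (N : ℕ) (hN : 1 ≤ N) (m : ℝ) (hm0 : 0 < m) (hm : 3 * Real.exp 1 * (N * m) ≤ 1) :
    (1 / Real.exp 1 - 3 * (N * m)) ≤
      (1 - m) ^ N * (Real.exp (-1) - 2 * N * m) * (1 / (1 + m)) ^ N := by
  have hN' : (1:ℝ) ≤ N := by exact_mod_cast hN
  have he : (2:ℝ) < Real.exp 1 := by have := Real.exp_one_gt_d9; linarith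
  have hx0 : 0 < N * m := by positivity
  have hx : N * m ≤ 1 / 6 := by nlinarith
  have hmx : m ≤ N * m := by nlinarith
  have h1 : 1 - 2 * m ≤ (1 - m) * (1 / (1 + m)) := by
    rw [mul_one_div, le_div_iff₀ (by linarith)]; nlinarith
  have h2 : 1 - 2 * (N * m) ≤ ((1 - m) * (1 / (1 + m))) ^ N := by
    have := one_add_mul_le_pow (a := -(2 * m)) (by linarith) N
    calc 1 - 2 * (N * m) = 1 + N * (-(2 * m)) := by ring
      _ ≤ (1 + -(2 * m)) ^ N := this
      _ ≤ _ := by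
        apply pow_le_pow_left₀ (by linarith)
        linarith
  rw [mul_pow] at h2
  have h3 : Real.exp (-1) = 1 / Real.exp 1 := by rw [Real.exp_neg, one_div]
  have h4 : 3 * (N * m) ≤ 1 / Real.exp 1 := by
    rw [le_div_iff₀ (by positivity)]; linarith
  have h5 : 1 / Real.exp 1 ≤ 1 / 2 := one_div_le_one_div_of_le (by norm_num) he.le
  rw [h3]
  set c := 1 / Real.exp 1
  have h6 : 0 ≤ c - 2 * N * m := by linarith
  have h7 := mul_le_mul_of_nonneg_right h2 h6
  nlinarith

lemma mixVol_lat (n d : ℕ) (A H : Set ((Fin n → ℝ) × (Fin d → ℝ))) :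
    mixVol n d ((A ∩ mixLattice n d) ∩ H) =
      ∑' z : Fin n → ℤ, volume {x : Fin d → ℝ | ((fun i => (z i : ℝ)), x) ∈ A ∩ H} := by
  unfold mixVol
  congr 1
  funext z
  congr 1
  ext x
  constructor
  · rintro ⟨⟨h1, _⟩, h2⟩
    exact ⟨h1, h2⟩
  · rintro ⟨h1, h2⟩
    exact ⟨⟨h1, ⟨z, rfl⟩⟩, h2⟩

lemma dot_clm (n d : ℕ) (a : (Fin n → ℝ) × (Fin d → ℝ)) :
    ∃ f : ((Fin n → ℝ) × (Fin d → ℝ)) →L[ℝ] ℝ, ∀ u, f u = dotP n d a u := by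
  refine ⟨LinearMap.toContinuousLinearMap
    { toFun := fun u => dotP n d a u, map_add' := ?_, map_smul' := ?_ }, fun u => rfl⟩
  · intro x y
    simp only [dotP, Prod.fst_add, Prod.snd_add, Pi.add_apply, mul_add, Finset.sum_add_distrib]
    ring
  · intro r x
    simp only [dotP, Prod.smul_fst, Prod.smul_snd, Pi.smul_apply, smul_eq_mul, RingHom.id_apply,
      mul_add, Finset.mul_sum]
    congr 1 <;> exact Finset.sum_congr rfl (fun i _ => by ring)

lemma dot_ne (n d : ℕ) (a : (Fin n → ℝ) × (Fin d → ℝ)) (ha : a ≠ 0) : dotP n d a a ≠ 0 := by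
  intro h
  apply ha
  have h1 : 0 ≤ ∑ i, a.1 i * a.1 i := Finset.sum_nonneg (fun i _ => mul_self_nonneg _)
  have h2 : 0 ≤ ∑ i, a.2 i * a.2 i := Finset.sum_nonneg (fun i _ => mul_self_nonneg _)
  unfold dotP at h
  have h3 : ∑ i, a.1 i * a.1 i = 0 := by linarith
  have h4 : ∑ i, a.2 i * a.2 i = 0 := by linarith
  rw [Finset.sum_eq_zero_iff_of_nonneg (fun i _ => mul_self_nonneg _)] at h3 h4
  ext i
  · simpa using h3 i (Finset.mem_univ i)
  · simpa using h4 i (Finset.mem_univ i)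

lemma round_pt (n d : ℕ) (C : Set ((Fin n → ℝ) × (Fin d → ℝ))) (hconv : Convex ℝ C)
    (z₀ : Fin n → ℝ) (k : ℝ)
    (hbox : ∀ u : Fin n → ℝ, (∀ i, |u i - z₀ i| ≤ k) → ∃ g, (u, g) ∈ C)
    (m : ℝ) (hm0 : 0 < m) (hm1 : m < 1) (hmk : 1 / 2 ≤ m * k)
    (y : (Fin n → ℝ) × (Fin d → ℝ)) (hy : y ∈ C) :
    ∃ v ∈ C, (1 - m) • y + m • v ∈ C ∩ mixLattice n d := by
  have hm1' : 0 < 1 - m := by linarith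
  obtain ⟨z, hz⟩ : ∃ z, tileMap n (1 - m) (fun i => m * z₀ i + 1 / 2) y.1 = z := ⟨_, rfl⟩
  obtain ⟨g, hg⟩ := hbox (fun i => (z i - (1 - m) * y.1 i) / m) (by
    intro i
    have h1 := congrFun hz i
    simp only [tileMap, Int.floor_eq_iff] at h1
    have h6 : (z i - (1 - m) * y.1 i) / m - z₀ i = (z i - (1 - m) * y.1 i - m * z₀ i) / m := by
      field_simp
    rw [h6, abs_div, abs_of_pos hm0, div_le_iff₀ hm0, abs_le]
    constructor <;> linarith)
  refine ⟨_, hg, hconv hy hg hm1'.le hm0.le (by ring), z, ?_⟩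
  funext i
  simp
  field_simp
  try ring

end helpers

/-- Main theorem: linear threshold for mixed-integer halfspace depth.  `ℝⁿ = Fin n → ℝ`
carries the sup norm, so `Metric.closedBall z₀ k` is the translate `z₀ + k·B∞ⁿ`. -/
theorem main_linear_threshold (n d : ℕ) (hn : 1 ≤ n) (hd : 1 ≤ d)
    (C : Set ((Fin n → ℝ) × (Fin d → ℝ)))
    (hconv : Convex ℝ C) (hcomp : IsCompact C) (hint : (interior C).Nonempty)
    (z₀ : Fin n → ℝ) (k : ℝ)
    (hk : 3 * Real.exp 1 / 2 * (n + d) ≤ k)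
    (hbox : Metric.closedBall z₀ k ⊆ Prod.fst '' C) :
    ∃ ystar ∈ C ∩ mixLattice n d,
      ∀ (a : (Fin n → ℝ) × (Fin d → ℝ)) (c : ℝ), a ≠ 0 → c ≤ dotP n d a ystar →
        ENNReal.ofReal (1 / Real.exp 1 - 3 * (n + d) / (2 * k)) *
            mixVol n d (C ∩ mixLattice n d) ≤
          mixVol n d ((C ∩ mixLattice n d) ∩ {u | c ≤ dotP n d a u}) := by
  have hn' : (1:ℝ) ≤ n := by exact_mod_cast hn
  have hd' : (1:ℝ) ≤ d := by exact_mod_cast hd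
  have he : (2:ℝ) < Real.exp 1 := by have := Real.exp_one_gt_d9; linarith
  have hk0 : 1 < k := by nlinarith
  obtain ⟨m, hm⟩ : ∃ m, m = 1 / (2 * k) := ⟨_, rfl⟩
  have hm0 : 0 < m := by rw [hm]; positivity
  have hmk : m * k = 1 / 2 := by rw [hm]; field_simp
  have hm1 : m < 1 := by nlinarith
  have hm1' : 0 < 1 - m := by linarith
  have hN : 1 ≤ n + d := by omega
  have hbox' : ∀ u : Fin n → ℝ, (∀ i, |u i - z₀ i| ≤ k) → ∃ g, (u, g) ∈ C := by
    intro u hu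
    obtain ⟨p, hp, rfl⟩ := hbox (show u ∈ Metric.closedBall z₀ k from by
      rw [Metric.mem_closedBall, dist_pi_le_iff (by linarith)]
      intro i
      rw [Real.dist_eq]
      exact hu i)
    exact ⟨p.2, hp⟩
  have hnum := numeric (n + d) hN m hm0 (by
    push_cast
    have := mul_le_mul_of_nonneg_left hk hm0.le
    rw [hmk] at this
    linarith)
  have hgoal : 3 * ((n:ℝ) + d) / (2 * k) = 3 * (((n + d : ℕ) : ℝ) * m) := by
    rw [hm]; push_cast; field_simp
  rw [hgoal]
  have hmeas : MeasurableSet C := hcomp.measurableSet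
  have hup := upper n d C hconv hmeas z₀ k hbox' (m / (1 + m)) (by positivity)
    (by rw [div_lt_one (by linarith)]; linarith) (by
      have h1 : 1 - m / (1 + m) = 1 / (1 + m) := by field_simp; ring
      have h2 : m / (1 + m) * k = (m * k) / (1 + m) := by ring
      rw [h1, h2, hmk]
      apply le_of_eq
      ring)
  have h1 : 1 - m / (1 + m) = 1 / (1 + m) := by field_simp; ring
  rw [h1] at hup
  obtain ⟨y, hyC, hy⟩ := depth_cont n d hN C hconv hcomp hint
  obtain ⟨v, hvC, hv⟩ := round_pt n d C hconv z₀ k hbox' m hm0 hm1 hmk.ge y hyC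
  refine ⟨_, hv, ?_⟩
  intro a c ha hc
  obtain ⟨f, hf⟩ := dot_clm n d a
  have hf0 : f ≠ 0 := by
    intro h
    apply dot_ne n d a ha
    rw [← hf, h]
    rfl
  have hfc : Continuous f := f.continuous
  obtain ⟨p, hpC, hp⟩ := hcomp.exists_isMinOn ⟨y, hyC⟩ hfc.continuousOn
  obtain ⟨q, hqC, hq⟩ := hcomp.exists_isMaxOn ⟨y, hyC⟩ hfc.continuousOn
  have hp' : ∀ x ∈ C, f p ≤ f x := fun x hx => hp hx
  have hq' : ∀ x ∈ C, f x ≤ f q := fun x hx => hq hx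
  have hW := lt_of_nonzero n d C hint f hf0 _ _ hp' hq'
  have hW' : 0 < f q - f p := by linarith
  obtain ⟨δ, hδ⟩ : ∃ δ, δ = m / (1 - m) * (f q - f p) := ⟨_, rfl⟩
  have hδ0 : 0 ≤ δ := by rw [hδ]; positivity
  have hδm : (1 - m) * δ = m * (f q - f p) := by rw [hδ]; field_simp
  have hrat : 2 * ((n : ℝ) + d) * δ / (f q - f p + δ) = 2 * ((n + d : ℕ) : ℝ) * m := by
    rw [div_eq_iff (by linarith)]
    push_cast
    linear_combination (2 * ((n : ℝ) + d)) * hδm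
  have hdep := hy f hf0 p hpC q hqC hp' hq' δ hδ0
  rw [hrat] at hdep
  set A := C ∩ {x | f y + δ ≤ f x} with hA
  have hAm : MeasurableSet A := hmeas.inter (measurableSet_le measurable_const hfc.measurable)
  have hlow := lower n d C A (C ∩ {u | c ≤ dotP n d a u}) hAm z₀ k hbox' m hm0 hm1 hmk.ge (by
    intro b hb c' hc'
    refine ⟨hconv hb.1 hc' hm1'.le hm0.le (by ring), ?_⟩
    have hb2 : f y + δ ≤ f b := hb.2
    have h2 := hp' c' hc'
    have h3 := hq' v hvC
    rw [← hf] at hc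
    show c ≤ dotP n d a _
    rw [← hf]
    simp only [map_add, map_smul, smul_eq_mul] at hc ⊢
    have h4 := mul_le_mul_of_nonneg_left hb2 hm1'.le
    have h5 := mul_le_mul_of_nonneg_left h2 hm0.le
    have h6 := mul_le_mul_of_nonneg_left h3 hm0.le
    linarith)
  rw [mixVol_lat]
  have hS : mixVol n d (C ∩ mixLattice n d) =
      ∑' z : Fin n → ℤ, volume {x : Fin d → ℝ | ((fun i => (z i : ℝ)), x) ∈ C} := by
    have := mixVol_lat n d C univ
    simpa only [inter_univ] using this
  rw [hS]
  have hCfin : volume C ≠ ∞ := hcomp.measure_lt_top.ne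
  have hAfin : volume A ≠ ∞ := measure_ne_top_of_subset inter_subset_left hCfin
  have hdep' : ENNReal.ofReal (Real.exp (-1) - 2 * ((n + d : ℕ) : ℝ) * m) * volume C
      ≤ volume A := by
    rw [← ENNReal.ofReal_toReal hCfin, ← ENNReal.ofReal_mul' ENNReal.toReal_nonneg]
    rw [← ENNReal.ofReal_toReal hAfin]
    exact ENNReal.ofReal_le_ofReal hdep
  set T := ∑' z : Fin n → ℤ, volume {x : Fin d → ℝ | ((fun i => (z i : ℝ)), x) ∈ C}
  calc _ ≤ ENNReal.ofReal ((1 - m) ^ (n + d) * (Real.exp (-1) - 2 * ((n + d : ℕ) : ℝ) * m) *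
          (1 / (1 + m)) ^ (n + d)) * T := by
        gcongr 1
        exact ENNReal.ofReal_le_ofReal hnum
    _ = ENNReal.ofReal ((1 - m) ^ (n + d)) *
          (ENNReal.ofReal (Real.exp (-1) - 2 * ((n + d : ℕ) : ℝ) * m) *
          (ENNReal.ofReal ((1 / (1 + m)) ^ (n + d)) * T)) := by
        rw [ENNReal.ofReal_mul' (by positivity), ENNReal.ofReal_mul (by positivity)]
        ring
    _ ≤ ENNReal.ofReal ((1 - m) ^ (n + d)) *
          (ENNReal.ofReal (Real.exp (-1) - 2 * ((n + d : ℕ) : ℝ) * m) * volume C) := by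
        gcongr
    _ ≤ ENNReal.ofReal ((1 - m) ^ (n + d)) * volume A := by
        gcongr
    _ ≤ _ := hlow
end

section
/- Let C ⊂ ℝ^{n+d} be a convex body, S = C ∩ (ℤⁿ × ℝ^d), K = proj_{ℝⁿ}(C), and suppose z₀ + k·B∞ⁿ ⊆ K with k ≥ 3e(n+d). Then there exists y* ∈ S such that every closed halfspace H containing y* satisfies H_d(S ∩ H) ≥ (1/(2e)) · H_d(S) ≥ (1/(2ⁿe)) · H_d(S). -/
open MeasureTheory Set
open scoped ENNReal

lemma bm1_aux {A B D : Set ℝ} (hA : MeasurableSet A) (hB : MeasurableSet B)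
    (hAn : A.Nonempty) (hBn : B.Nonempty) (h : ∀ x ∈ A, ∀ y ∈ B, x + y ∈ D) :
    volume A + volume B ≤ volume D := by
  rcases eq_or_ne (volume A) 0 with hA0 | hA0
  · obtain ⟨a, ha⟩ := hAn
    rw [hA0, zero_add]
    have e2 : volume ((fun x => a + x) '' B) = volume B := by simp
    rw [← e2]
    apply measure_mono
    rintro _ ⟨x, hx, rfl⟩
    exact h _ ha _ hx
  rcases eq_or_ne (volume B) 0 with hB0 | hB0
  · obtain ⟨b, hb⟩ := hBn
    rw [hB0, add_zero]
    have e2 : volume ((fun x => x + b) '' A) = volume A := by simp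
    rw [← e2]
    apply measure_mono
    rintro _ ⟨x, hx, rfl⟩
    exact h _ hx _ hb
  by_contra! hlt
  obtain ⟨y, hy, z, hz, hyz⟩ := ENNReal.exists_lt_add_of_lt_add hlt hA0 hB0
  refine absurd hyz (not_lt.2 ?_)
  obtain ⟨K, hKA, hK, hyK⟩ := hA.exists_lt_isCompact hy
  obtain ⟨L, hLB, hL, hzL⟩ := hB.exists_lt_isCompact hz
  obtain ⟨a, ha⟩ := hAn
  obtain ⟨b, hb⟩ := hBn
  have hK' : IsCompact (insert a K) := hK.insert a
  have hL' : IsCompact (insert b L) := hL.insert b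
  obtain ⟨p, hp, hpm⟩ := hK'.exists_isGreatest ⟨a, mem_insert _ _⟩
  obtain ⟨q, hq, hqm⟩ := hL'.exists_isLeast ⟨b, mem_insert _ _⟩
  have hpA : p ∈ A := (insert_subset ha hKA) hp
  have hqB : q ∈ B := (insert_subset hb hLB) hq
  have e1 : volume ((fun x => x + q) '' K) = volume K := by
    simp
  have e2 : volume ((fun x => p + x) '' L) = volume L := by
    simp
  have hd : AEDisjoint volume ((fun x => x + q) '' K) ((fun x => p + x) '' L) := by
    refine measure_mono_null (t := {p + q}) ?_ (by simp)
    rintro _ ⟨⟨x, hx, rfl⟩, ⟨y, hy, hxy⟩⟩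
    have h1 := hpm (mem_insert_of_mem a hx)
    have h2 := hqm (mem_insert_of_mem b hy)
    simp only [mem_singleton_iff] at *
    linarith
  calc y + z ≤ volume K + volume L := add_le_add hyK.le hzL.le
    _ = volume ((fun x => x + q) '' K ∪ (fun x => p + x) '' L) := by
        rw [measure_union₀ _ hd, e1, e2]
        exact ((hL.image (by fun_prop)).measurableSet).nullMeasurableSet
    _ ≤ volume D := by
        apply measure_mono
        rintro _ (⟨x, hx, rfl⟩ | ⟨x, hx, rfl⟩)
        · exact h _ (hKA hx) _ hqB
        · exact h _ hpA _ (hLB hx)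

open scoped Pointwise in
lemma bm1_s15 {A B D : Set ℝ} {t : ℝ} (ht : t ∈ Ioo (0:ℝ) 1) (hA : MeasurableSet A) (hB : MeasurableSet B)
    (hAn : A.Nonempty) (hBn : B.Nonempty) (h : ∀ x ∈ A, ∀ y ∈ B, (1 - t) * x + t * y ∈ D) :
    ENNReal.ofReal (1 - t) * volume A + ENNReal.ofReal t * volume B ≤ volume D := by
  have h1 : 0 < 1 - t := by linarith [ht.2]
  have := bm1_aux (A := (1 - t) • A) (B := t • B) (D := D) (hA.const_smul₀ _) (hB.const_smul₀ _)
    (hAn.smul_set) (hBn.smul_set) (by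
      rintro _ ⟨x, hx, rfl⟩ _ ⟨y, hy, rfl⟩
      simpa using h x hx y hy)
  simpa [Measure.addHaar_smul, abs_of_pos h1, abs_of_pos ht.1] using this

lemma amgm_ennreal {t : ℝ} (ht : t ∈ Ioo (0:ℝ) 1) (x y : ℝ≥0∞) :
    x ^ (1 - t) * y ^ t ≤ ENNReal.ofReal (1 - t) * x + ENNReal.ofReal t * y := by
  have h1 : 0 < 1 - t := by linarith [ht.2]
  by_cases hx : x = ∞
  · subst hx
    rw [ENNReal.mul_top (by simpa using ht.2)]; simp
  by_cases hy : y = ∞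
  · subst hy
    rw [ENNReal.mul_top (by simpa using ht.1)]; simp
  lift x to NNReal using hx
  lift y to NNReal using hy
  have := NNReal.geom_mean_le_arith_mean2_weighted (Real.toNNReal (1 - t)) (Real.toNNReal t) x y
    (by rw [← Real.toNNReal_add h1.le ht.1.le]; simp)
  rw [Real.coe_toNNReal _ h1.le, Real.coe_toNNReal _ ht.1.le] at this
  rw [← ENNReal.coe_rpow_of_nonneg _ h1.le, ← ENNReal.coe_rpow_of_nonneg _ ht.1.le]
  unfold ENNReal.ofReal
  exact_mod_cast this

lemma pl1_norm {t : ℝ} (ht : t ∈ Ioo (0:ℝ) 1) (f g h : ℝ → ℝ) (hf : Measurable f)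
    (hg : Measurable g) (hh : Measurable h) (f0 : ∀ x, 0 ≤ f x) (g0 : ∀ x, 0 ≤ g x)
    (h0 : ∀ x, 0 ≤ h x) (f1 : ∀ x, f x ≤ 1) (g1 : ∀ x, g x ≤ 1)
    (fs : ∀ s < 1, ∃ x, s < f x) (gs : ∀ s < 1, ∃ x, s < g x)
    (H : ∀ x y, f x ^ (1 - t) * g y ^ t ≤ h ((1 - t) * x + t * y)) :
    (∫⁻ x, ENNReal.ofReal (f x)) ^ (1 - t) * (∫⁻ x, ENNReal.ofReal (g x)) ^ t
      ≤ ∫⁻ x, ENNReal.ofReal (h x) := by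
  have h1 : 0 < 1 - t := by linarith [ht.2]
  refine (amgm_ennreal ht _ _).trans ?_
  rw [lintegral_eq_lintegral_meas_lt _ (.of_forall f0) hf.aemeasurable,
    lintegral_eq_lintegral_meas_lt _ (.of_forall g0) hg.aemeasurable,
    lintegral_eq_lintegral_meas_lt _ (.of_forall h0) hh.aemeasurable]
  have mf : Measurable fun s : ℝ => volume {a | s < f a} := by
    apply Antitone.measurable
    intro a b hab
    exact measure_mono fun x hx => lt_of_le_of_lt hab hx
  rw [← lintegral_const_mul' _ _ (by simp), ← lintegral_const_mul' _ _ (by simp),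
    ← lintegral_add_left (mf.const_mul _)]
  apply lintegral_mono_ae
  filter_upwards [ae_restrict_mem measurableSet_Ioi] with s hs
  simp only [mem_Ioi] at hs
  rcases lt_or_ge s 1 with hs1 | hs1
  · apply bm1_s15 ht (measurableSet_lt measurable_const hf) (measurableSet_lt measurable_const hg)
      (fs s hs1) (gs s hs1)
    intro x hx y hy
    refine lt_of_lt_of_le ?_ (H x y)
    calc s = s ^ (1 - t) * s ^ t := by rw [← Real.rpow_add hs]; simp
      _ < f x ^ (1 - t) * g y ^ t := by
        have := Real.rpow_lt_rpow hs.le hx h1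
        have := Real.rpow_lt_rpow hs.le hy ht.1
        gcongr
  · have e1 : {a | s < f a} = ∅ := by
      ext x; simpa using (f1 x).trans hs1
    have e2 : {a | s < g a} = ∅ := by
      ext x; simpa using (g1 x).trans hs1
    simp [e1, e2]

lemma pl1_bdd {t : ℝ} (ht : t ∈ Ioo (0:ℝ) 1) (f g h : ℝ → ℝ≥0∞) (hf : Measurable f)
    (hg : Measurable g) (hh : Measurable h) (bf : ⨆ x, f x ≠ ∞) (bg : ⨆ x, g x ≠ ∞)
    (H : ∀ x y, f x ^ (1 - t) * g y ^ t ≤ h ((1 - t) * x + t * y)) :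
    (∫⁻ x, f x) ^ (1 - t) * (∫⁻ x, g x) ^ t ≤ ∫⁻ x, h x := by
  have h1 : 0 < 1 - t := by linarith [ht.2]
  set M := ⨆ x, f x with hM
  set N := ⨆ x, g x with hN
  have fM : ∀ x, f x ≤ M := fun x => le_iSup f x
  have gN : ∀ x, g x ≤ N := fun x => le_iSup g x
  by_cases M0 : M = 0
  · have : ∀ x, f x = 0 := fun x => by simpa [M0] using fM x
    simp [this, h1]
  by_cases N0 : N = 0
  · have : ∀ x, g x = 0 := fun x => by simpa [N0] using gN x
    simp [this, ht.1]
  set R := M ^ (1 - t) * N ^ t with hR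
  have R0 : R ≠ 0 := by simp [hR, M0, N0, bf, bg]
  have RT : R ≠ ∞ := by
    exact ENNReal.mul_ne_top (ENNReal.rpow_ne_top_of_nonneg h1.le bf)
      (ENNReal.rpow_ne_top_of_nonneg ht.1.le bg)
  have f1 : ∀ x, f x / M ≤ 1 := fun x => ENNReal.div_le_of_le_mul (by simpa using fM x)
  have g1 : ∀ x, g x / N ≤ 1 := fun x => ENNReal.div_le_of_le_mul (by simpa using gN x)
  have fT : ∀ x, f x / M ≠ ∞ := fun x => ne_top_of_le_ne_top ENNReal.one_ne_top (f1 x)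
  have gT : ∀ x, g x / N ≠ ∞ := fun x => ne_top_of_le_ne_top ENNReal.one_ne_top (g1 x)
  have hT : ∀ x, min (h x / R) 1 ≠ ∞ := fun x =>
    ne_top_of_le_ne_top ENNReal.one_ne_top (min_le_right _ _)
  have sup : ∀ (u : ℝ → ℝ≥0∞) (K : ℝ≥0∞), K = ⨆ x, u x → K ≠ 0 → K ≠ ∞ → (∀ x, u x / K ≠ ∞) →
      ∀ s < (1:ℝ), ∃ x, s < (u x / K).toReal := by
    intro u K hK K0 KT uT s hs
    by_contra! hc
    have : K ≤ ENNReal.ofReal s * K := by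
      conv_lhs => rw [hK]
      refine iSup_le fun x => ?_
      have := hc x
      rw [← ENNReal.le_ofReal_iff_toReal_le (uT x) (le_trans ENNReal.toReal_nonneg this)] at this
      exact (ENNReal.div_le_iff K0 KT).1 this
    have h2 : ENNReal.ofReal s * K < 1 * K := by
      apply ENNReal.mul_lt_mul_left K0 KT
      simpa using hs
    simp at h2
    exact absurd this (not_le.2 h2)
  have key := pl1_norm ht (fun x => (f x / M).toReal) (fun x => (g x / N).toReal)
    (fun x => (min (h x / R) 1).toReal) (by fun_prop) (by fun_prop) (by fun_prop)
    (fun _ => ENNReal.toReal_nonneg) (fun _ => ENNReal.toReal_nonneg)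
    (fun _ => ENNReal.toReal_nonneg)
    (fun x => ENNReal.toReal_le_of_le_ofReal zero_le_one (by simpa using f1 x))
    (fun x => ENNReal.toReal_le_of_le_ofReal zero_le_one (by simpa using g1 x))
    (sup f M hM M0 bf fT) (sup g N hN N0 bg gT) (by
      intro x y
      rw [ENNReal.toReal_rpow, ENNReal.toReal_rpow, ← ENNReal.toReal_mul]
      apply ENNReal.toReal_mono (hT _)
      apply le_min
      · rw [ENNReal.div_rpow_of_nonneg _ _ h1.le, ENNReal.div_rpow_of_nonneg _ _ ht.1.le,
          ENNReal.le_div_iff_mul_le (.inl R0) (.inl RT), hR]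
        refine le_trans (le_of_eq ?_) (H x y)
        have a1 : M ^ (1 - t) ≠ 0 := by simp [M0, bf]
        have a2 : M ^ (1 - t) ≠ ∞ := ENNReal.rpow_ne_top_of_nonneg h1.le bf
        have a3 : N ^ t ≠ 0 := by simp [N0, bg]
        have a4 : N ^ t ≠ ∞ := ENNReal.rpow_ne_top_of_nonneg ht.1.le bg
        rw [mul_mul_mul_comm, ENNReal.div_mul_cancel a1 a2, ENNReal.div_mul_cancel a3 a4]
      · exact mul_le_one' (ENNReal.rpow_le_one (f1 x) h1.le) (ENNReal.rpow_le_one (g1 y) ht.1.le))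
  simp only [ENNReal.ofReal_toReal (fT _), ENNReal.ofReal_toReal (gT _),
    ENNReal.ofReal_toReal (hT _)] at key
  have key2 := key.trans (lintegral_mono fun x => min_le_left (h x / R) 1)
  simp only [div_eq_mul_inv] at key2
  rw [lintegral_mul_const _ hf, lintegral_mul_const _ hg, lintegral_mul_const _ hh,
    ← div_eq_mul_inv, ← div_eq_mul_inv, ← div_eq_mul_inv,
    ENNReal.div_rpow_of_nonneg _ _ h1.le, ENNReal.div_rpow_of_nonneg _ _ ht.1.le,
    ENNReal.le_div_iff_mul_le (.inl R0) (.inl RT), hR] at key2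
  have a1 : M ^ (1 - t) ≠ 0 := by simp [M0, bf]
  have a2 : M ^ (1 - t) ≠ ∞ := ENNReal.rpow_ne_top_of_nonneg h1.le bf
  have a3 : N ^ t ≠ 0 := by simp [N0, bg]
  have a4 : N ^ t ≠ ∞ := ENNReal.rpow_ne_top_of_nonneg ht.1.le bg
  rwa [mul_mul_mul_comm, ENNReal.div_mul_cancel a1 a2, ENNReal.div_mul_cancel a3 a4] at key2

/-- The Prékopa–Leindler property. -/
def PL (E : Type) [AddCommGroup E] [Module ℝ E] [MeasureSpace E] : Prop :=
  ∀ t ∈ Ioo (0:ℝ) 1, ∀ f g h : E → ℝ≥0∞, Measurable f → Measurable g → Measurable h →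
    (∀ x y, f x ^ (1 - t) * g y ^ t ≤ h ((1 - t) • x + t • y)) →
    (∫⁻ x, f x) ^ (1 - t) * (∫⁻ x, g x) ^ t ≤ ∫⁻ x, h x

lemma PL_real : PL ℝ := by
  intro t ht f g h hf hg hh H
  have h1 : 0 < 1 - t := by linarith [ht.2]
  by_cases f0 : ∫⁻ x, f x = 0
  · simp [f0, h1]
  by_cases g0 : ∫⁻ x, g x = 0
  · simp [g0, ht.1]
  have lim : ∀ u : ℝ → ℝ≥0∞, Measurable u →
      Filter.Tendsto (fun n : ℕ => ∫⁻ x, min (u x) n) Filter.atTop (nhds (∫⁻ x, u x)) := by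
    intro u hu
    apply lintegral_tendsto_of_tendsto_of_monotone
    · intro n; fun_prop
    · refine .of_forall fun x n m hnm => ?_
      exact min_le_min le_rfl (by exact_mod_cast hnm)
    · refine .of_forall fun x => ?_
      have := (tendsto_const_nhds (x := u x)).min ENNReal.tendsto_nat_nhds_top
      simpa using this
  have T := ENNReal.Tendsto.mul
    ((ENNReal.continuous_rpow_const (y := 1 - t)).continuousAt.tendsto.comp (lim f hf))
    (.inl (by simp [f0, h1, not_lt.2 h1.le]))
    ((ENNReal.continuous_rpow_const (y := t)).continuousAt.tendsto.comp (lim g hg))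
    (.inl (by simp [g0, ht.1, not_lt.2 ht.1.le]))
  refine le_of_tendsto' T fun n => ?_
  refine pl1_bdd ht _ _ _ (by fun_prop) (by fun_prop) hh ?_ ?_ ?_
  · exact ne_top_of_le_ne_top (ENNReal.natCast_ne_top n) (iSup_le fun x => min_le_right _ _)
  · exact ne_top_of_le_ne_top (ENNReal.natCast_ne_top n) (iSup_le fun x => min_le_right _ _)
  · intro x y
    refine le_trans ?_ (H x y)
    have := ht.1
    gcongr <;> exact min_le_left _ _

lemma PL_prod {E F : Type} [AddCommGroup E] [Module ℝ E] [MeasureSpace E] [AddCommGroup F]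
    [Module ℝ F] [MeasureSpace F] [SFinite (volume : Measure F)] (hE : PL E) (hF : PL F) :
    PL (E × F) := by
  intro t ht f g h hf hg hh H
  rw [Measure.volume_eq_prod, lintegral_prod _ hf.aemeasurable, lintegral_prod _ hg.aemeasurable,
    lintegral_prod _ hh.aemeasurable]
  refine hE t ht _ _ _ hf.lintegral_prod_right' hg.lintegral_prod_right'
    hh.lintegral_prod_right' ?_
  intro x x'
  exact hF t ht _ _ _ (by fun_prop) (by fun_prop) (by fun_prop) fun y y' => H (x, y) (x', y')

lemma PL_pi (n : ℕ) : PL (Fin n → ℝ) := by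
  induction n with
  | zero =>
    intro t ht f g h hf hg hh H
    have := H default default
    have e : (volume : Measure (Fin 0 → ℝ)) = Measure.dirac default := by
      rw [volume_pi]; exact Measure.pi_of_empty _ _
    rw [e, lintegral_dirac, lintegral_dirac, lintegral_dirac]
    convert this
  | succ n ih =>
    intro t ht f g h hf hg hh H
    have mp := (volume_preserving_piFinSuccAbove (fun _ : Fin (n + 1) => ℝ) 0).symm
    have P := PL_prod PL_real ih t ht
      (f ∘ (MeasurableEquiv.piFinSuccAbove (fun _ => ℝ) 0).symm)
      (g ∘ (MeasurableEquiv.piFinSuccAbove (fun _ => ℝ) 0).symm)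
      (h ∘ (MeasurableEquiv.piFinSuccAbove (fun _ => ℝ) 0).symm)
      (hf.comp (MeasurableEquiv.measurable _)) (hg.comp (MeasurableEquiv.measurable _))
      (hh.comp (MeasurableEquiv.measurable _)) (by
        intro x y
        refine (H _ _).trans (le_of_eq ?_)
        simp only [Function.comp]
        congr 1
        ext i
        refine Fin.cases ?_ (fun j => ?_) i <;> simp [MeasurableEquiv.piFinSuccAbove])
    have ef : ∀ u : (Fin (n + 1) → ℝ) → ℝ≥0∞, Measurable u →
        ∫⁻ x, (u ∘ (MeasurableEquiv.piFinSuccAbove (fun _ => ℝ) 0).symm) x = ∫⁻ x, u x :=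
      fun u hu => mp.lintegral_comp hu
    rwa [ef f hf, ef g hg, ef h hh] at P

/-- Grünbaum's inequality for a law on the line with log-concave distribution function. -/
lemma grunbaum_real (μ : Measure ℝ) [IsProbabilityMeasure μ] (hi : Integrable (fun x => x) μ)
    (hlc : ∀ x y, ∀ t ∈ Ioo (0:ℝ) 1,
      (μ.real (Iic x)) ^ (1 - t) * (μ.real (Iic y)) ^ t ≤ μ.real (Iic ((1 - t) * x + t * y))) :
    Real.exp (-1) ≤ μ.real (Iic (∫ x, x ∂μ)) := by
  set m := ∫ x, x ∂μ with hm
  set G : ℝ → ℝ := fun x => μ.real (Iic x) with hG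
  have Gmono : Monotone G := fun x y h => measureReal_mono (Iic_subset_Iic.2 h)
  have G1 : ∀ x, G x ≤ 1 := fun x => measureReal_le_one
  have G0 : ∀ x, 0 ≤ G x := fun x => measureReal_nonneg
  have im : Integrable (fun x => x - m) μ := hi.sub (integrable_const m)
  have im0 : ∫ x, (x - m) ∂μ = 0 := by
    rw [integral_sub hi (integrable_const m)]; simp [hm]
  by_cases hx : ∃ x < m, 0 < G x
  swap
  · -- the law is a Dirac mass
    push Not at hx
    have z : μ (Iio m) = 0 := by
      have : Iio m = ⋃ q : {q : ℚ // (q : ℝ) < m}, Iic (q : ℝ) := by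
        ext y
        simp only [mem_Iio, mem_iUnion, mem_Iic]
        constructor
        · intro h
          obtain ⟨q, h1, h2⟩ := exists_rat_btwn h
          exact ⟨⟨q, h2⟩, h1.le⟩
        · rintro ⟨q, h⟩; exact h.trans_lt q.2
      rw [this, measure_iUnion_null_iff]
      intro q
      have := le_antisymm (hx q q.2) (G0 _)
      simpa [hG, measureReal_eq_zero_iff] using this
    have ge : 0 ≤ᵐ[μ] fun x => x - m := by
      have : ∀ᵐ x ∂μ, x ∉ Iio m := measure_eq_zero_iff_ae_notMem.1 z
      filter_upwards [this] with x hx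
      simpa using hx
    have := (integral_eq_zero_iff_of_nonneg_ae ge im).1 im0
    have : ∀ᵐ x ∂μ, x ∈ Iic m := by
      filter_upwards [this] with x hx
      simp at hx
      simp; linarith
    have h1 : μ (Iic m) = 1 := by rw [prob_compl_eq_zero_iff measurableSet_Iic |>.symm]; exact this
    have h2 : G m = 1 := by simp [hG, measureReal_def, h1]
    change _ ≤ G m
    rw [h2]; exact Real.exp_le_one_iff.2 (by norm_num)
  obtain ⟨x₁, hx₁m, hx₁⟩ := hx
  set I : Set ℝ := {x | 0 < G x} with hI
  have Iup : ∀ x ∈ I, ∀ y, x ≤ y → y ∈ I := fun x hx y hxy => lt_of_lt_of_le hx (Gmono hxy)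
  have Iconv : Convex ℝ I := by
    have : I.OrdConnected := ⟨fun x hx y _ z hz => Iup x hx z hz.1⟩
    exact this.convex
  have cvx : ConvexOn ℝ I (fun x => -Real.log (G x)) := by
    refine ⟨Iconv, ?_⟩
    intro x hx y hy a b ha hb hab
    rcases eq_or_lt_of_le ha with rfl | ha
    · have : b = 1 := by linarith
      subst this; simp
    rcases eq_or_lt_of_le hb with rfl | hb
    · have : a = 1 := by linarith
      subst this; simp
    have hb1 : a = 1 - b := by linarith
    subst hb1
    have := hlc x y b ⟨hb, by linarith⟩
    have h2 := Real.log_le_log (mul_pos (Real.rpow_pos_of_pos hx _) (Real.rpow_pos_of_pos hy _)) this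
    rw [Real.log_mul (Real.rpow_pos_of_pos hx _).ne' (Real.rpow_pos_of_pos hy _).ne',
      Real.log_rpow hx, Real.log_rpow hy] at h2
    simp only [smul_eq_mul]
    simp only [hG]
    linarith
  have mI : m ∈ interior I := by
    rw [mem_interior]
    exact ⟨Ioi x₁, fun y hy => Iup x₁ hx₁ y (le_of_lt hy), isOpen_Ioi, hx₁m⟩
  obtain ⟨c, hc⟩ : ∃ c : ℝ, ∀ x ∈ I, -Real.log (G m) + c * (x - m) ≤ -Real.log (G x) := by
    refine ⟨derivWithin (fun x => -Real.log (G x)) (Ioi m) m, fun x hx => ?_⟩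
    rcases lt_trichotomy x m with h | rfl | h
    · have h1 := cvx.slope_le_leftDeriv_of_mem_interior hx mI h
      have h2 := h1.trans (cvx.leftDeriv_le_rightDeriv_of_mem_interior mI)
      rw [slope_def_field, div_le_iff₀ (by linarith)] at h2
      linarith
    · simp
    · have h1 := cvx.rightDeriv_le_slope_of_mem_interior mI hx h
      rw [slope_def_field, le_div_iff₀ (by linarith)] at h1
      linarith
  -- the tail bound
  have tail : ∀ r : ℝ, 0 ≤ r → μ {x | G x < r} ≤ ENNReal.ofReal r := by
    intro r hr
    by_contra! hlt
    obtain ⟨K, hKA, hK, hrK⟩ :=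
      (measurableSet_lt Gmono.measurable measurable_const : MeasurableSet {x | G x < r}).exists_lt_isCompact hlt
    rcases K.eq_empty_or_nonempty with rfl | hne
    · simp at hrK
    obtain ⟨p, hp, hpm⟩ := hK.exists_isGreatest hne
    have hGp : G p < r := hKA hp
    have e : μ (Iic p) = ENNReal.ofReal (G p) := by simp [hG]
    have h2 : μ K ≤ ENNReal.ofReal r :=
      (measure_mono (fun x hx => hpm hx : K ⊆ Iic p)).trans
        (e.le.trans (ENNReal.ofReal_le_ofReal hGp.le))
    exact absurd hrK (not_lt.2 h2)
  have Ipos : ∀ᵐ x ∂μ, x ∈ I := by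
    have h0 : μ {x | G x ≤ 0} = 0 := by
      refine le_antisymm (ENNReal.le_of_forall_pos_le_add ?_) (zero_le)
      intro ε hε _
      have := tail ε ε.2
      simp only [ENNReal.ofReal_coe_nnreal] at this
      refine le_trans (measure_mono ?_) (this.trans (by simp))
      intro x hx
      exact lt_of_le_of_lt hx (by exact_mod_cast hε)
    have := measure_eq_zero_iff_ae_notMem.1 h0
    filter_upwards [this] with x hx
    simpa [hI] using hx
  have Gmeas : Measurable G := Gmono.measurable
  have nn : ∀ x, 0 ≤ -Real.log (G x) := fun x => by
    simpa using Real.log_nonpos (G0 x) (G1 x)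
  have lb : ∫⁻ x, ENNReal.ofReal (-Real.log (G x)) ∂μ ≤ 1 := by
    rw [lintegral_eq_lintegral_meas_lt _ (.of_forall nn)
      (Real.measurable_log.comp Gmeas).neg.aemeasurable]
    calc ∫⁻ t in Ioi (0:ℝ), μ {a | t < -Real.log (G a)}
        ≤ ∫⁻ t in Ioi (0:ℝ), ENNReal.ofReal (Real.exp (-t)) := by
          refine lintegral_mono_ae ?_
          filter_upwards [ae_restrict_mem measurableSet_Ioi] with t ht
          refine le_trans (measure_mono_ae ?_) (tail _ (Real.exp_pos _).le)
          filter_upwards [Ipos] with x hx hxt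
          have hxt : t < -Real.log (G x) := hxt
          change G x < Real.exp (-t)
          rw [← Real.log_lt_iff_lt_exp hx]; linarith
      _ = 1 := by
          rw [← ofReal_integral_eq_lintegral_ofReal]
          · rw [integral_exp_neg_Ioi_zero]; simp
          · exact integrableOn_exp_neg_Ioi 0
          · exact .of_forall fun x => (Real.exp_pos _).le
  have intg : Integrable (fun x => -Real.log (G x)) μ := by
    refine ⟨(Real.measurable_log.comp Gmeas).neg.aestronglyMeasurable, ?_⟩
    rw [hasFiniteIntegral_iff_ofReal (.of_forall nn)]
    exact lb.trans_lt ENNReal.one_lt_top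
  have ile : ∫ x, -Real.log (G x) ∂μ ≤ 1 := by
    rw [integral_eq_lintegral_of_nonneg_ae (.of_forall nn) intg.1]
    exact ENNReal.toReal_le_of_le_ofReal zero_le_one (by simpa using lb)
  have : ∫ x, (-Real.log (G m) + c * (x - m)) ∂μ ≤ ∫ x, -Real.log (G x) ∂μ := by
    refine integral_mono_ae ((integrable_const _).add (im.const_mul c)) intg ?_
    filter_upwards [Ipos] with x hx using hc x hx
  rw [integral_add (integrable_const _) (im.const_mul c), integral_const_mul, im0] at this
  simp at this
  have Gm : 0 < G m := (interior_subset mI : m ∈ I)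
  change _ ≤ G m
  rw [← Real.le_log_iff_exp_le Gm]
  linarith

lemma hom_le {F : Type} [NormedAddCommGroup F] [NormedSpace ℝ F] [MeasurableSpace F] [BorelSpace F]
    [FiniteDimensional ℝ F] (μ : Measure F) [μ.IsAddHaarMeasure] {l : ℝ} (hl : l < 1)
    {A B : Set F} {p : F} (h : ∀ u ∈ A, (1 - l) • u + l • p ∈ B) :
    ENNReal.ofReal ((1 - l) ^ Module.finrank ℝ F) * μ A ≤ μ B := by
  have h1 : 0 < 1 - l := by linarith
  have := Measure.addHaar_image_homothety μ p (1 - l) A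
  rw [abs_of_pos (by positivity)] at this
  rw [← this]
  apply measure_mono
  rintro _ ⟨u, hu, rfl⟩
  convert h u hu using 1
  rw [AffineMap.homothety_apply]
  simp only [vsub_eq_sub, vadd_eq_add]
  module

lemma logconc {E : Type} [NormedAddCommGroup E] [NormedSpace ℝ E] [MeasureSpace E] [BorelSpace E]
    (hPL : PL E) {A B D : Set E} (hA : MeasurableSet A) (hB : MeasurableSet B)
    (hD : MeasurableSet D) {t : ℝ} (ht : t ∈ Ioo (0:ℝ) 1)
    (h : ∀ x ∈ A, ∀ y ∈ B, (1 - t) • x + t • y ∈ D) :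
    (volume A) ^ (1 - t) * (volume B) ^ t ≤ volume D := by
  have h1 : 0 < 1 - t := by linarith [ht.2]
  have := hPL t ht (A.indicator 1) (B.indicator 1) (D.indicator 1)
    (measurable_one.indicator hA) (measurable_one.indicator hB) (measurable_one.indicator hD) (by
      intro x y
      by_cases hx : x ∈ A
      · by_cases hy : y ∈ B
        · simp [hx, hy, h x hx y hy]
        · simp [hy, ht.1]
      · simp [hx, h1])
  simpa only [lintegral_indicator_one hA, lintegral_indicator_one hB,
    lintegral_indicator_one hD] using this

lemma grunbaum_body {E : Type} [NormedAddCommGroup E] [NormedSpace ℝ E] [MeasureSpace E]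
    [BorelSpace E] [FiniteDimensional ℝ E] [(volume : Measure E).IsAddHaarMeasure] (hPL : PL E)
    {C : Set E} (hconv : Convex ℝ C) (hcomp : IsCompact C) (hV : volume C ≠ 0) :
    ∃ cen ∈ C, ∀ L : E →L[ℝ] ℝ,
      Real.exp (-1) * volume.real C ≤ volume.real (C ∩ {u | L cen ≤ L u}) := by
  have hVT : volume C ≠ ∞ := hcomp.measure_lt_top.ne
  set P := ProbabilityTheory.cond volume C with hP
  have : IsProbabilityMeasure P := ProbabilityTheory.cond_isProbabilityMeasure_of_finite hV hVT
  have hCm : MeasurableSet C := hcomp.measurableSet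
  have hPC : ∀ᵐ u ∂P, u ∈ C := by
    apply Measure.ae_smul_measure
    exact ae_restrict_mem hCm
  have hint : Integrable (fun u => u) P := by
    apply Integrable.smul_measure _ (by simp [hV])
    exact continuous_id.continuousOn.integrableOn_compact hcomp
  refine ⟨∫ u, u ∂P, hconv.integral_mem hcomp.isClosed hPC hint, fun L => ?_⟩
  have hLm : Measurable fun u => -L u := L.continuous.neg.measurable
  have hLI : Integrable (fun u => -L u) P := (L.integrable_comp hint).neg
  set μ := P.map (fun u => -L u) with hμ
  have : IsProbabilityMeasure μ := Measure.isProbabilityMeasure_map hLm.aemeasurable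
  have V0 : 0 < volume.real C := by
    rw [measureReal_def]; exact ENNReal.toReal_pos hV hVT
  have hIic : ∀ x, μ.real (Iic x) = (volume.real C)⁻¹ * volume.real (C ∩ {u | -L u ≤ x}) := by
    intro x
    rw [hμ, map_measureReal_apply hLm measurableSet_Iic, hP, measureReal_def,
      ProbabilityTheory.cond_apply hCm, ENNReal.toReal_mul, ENNReal.toReal_inv]
    rfl
  have mA : ∀ x, MeasurableSet (C ∩ {u | -L u ≤ x}) := fun x =>
    hCm.inter (measurableSet_le hLm measurable_const)
  have fA : ∀ x, volume (C ∩ {u | -L u ≤ x}) ≠ ∞ := fun x =>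
    ne_top_of_le_ne_top hVT (measure_mono inter_subset_left)
  have key := grunbaum_real μ (by
      rw [hμ, integrable_map_measure (by fun_prop) hLm.aemeasurable]
      exact hLI) (by
      intro x y t ht
      have h1 : 0 < 1 - t := by linarith [ht.2]
      rw [hIic, hIic, hIic]
      have := logconc hPL (mA x) (mA y) (mA ((1 - t) * x + t * y)) ht (by
        rintro u ⟨hu, hux⟩ v ⟨hv, hvy⟩
        refine ⟨hconv hu hv h1.le ht.1.le (by ring), ?_⟩
        simp only [mem_ofPred_eq, map_add, map_smul, smul_eq_mul] at *
        nlinarith [ht.1])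
      have h2 := ENNReal.toReal_mono (fA _) this
      rw [ENNReal.toReal_mul, ← ENNReal.toReal_rpow, ← ENNReal.toReal_rpow] at h2
      simp only [← measureReal_def] at h2
      rw [Real.mul_rpow (by positivity) (by positivity), Real.mul_rpow (by positivity) (by positivity),
        mul_mul_mul_comm, ← Real.rpow_add (by positivity)]
      simp only [sub_add_cancel, Real.rpow_one]
      gcongr)
  have hmean : ∫ x, x ∂μ = - L (∫ u, u ∂P) := by
    rw [hμ, integral_map hLm.aemeasurable (by fun_prop), integral_neg, L.integral_comp_comm hint]
  rw [hmean, hIic, ← div_eq_inv_mul, le_div_iff₀ V0] at key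
  have hs : {u | -L u ≤ -L (∫ u, u ∂P)} = {u | L (∫ u, u ∂P) ≤ L u} := by
    ext u; simp
  rwa [hs] at key

section disc

variable {n d : ℕ}

lemma box_mem {z₀ : Fin n → ℝ} {k l : ℝ} (hl0 : 0 < l) (hk : 0 ≤ k) (hlk : l * k = 1 / 2)
    (w z : Fin n → ℝ) (hwz : ∀ i, |z i - ((1 - l) * w i + l * z₀ i)| ≤ 1 / 2) :
    (fun i => (z i - (1 - l) * w i) / l) ∈ Metric.closedBall z₀ k := by
  rw [Metric.mem_closedBall, dist_pi_le_iff hk]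
  intro i
  rw [Real.dist_eq]
  have : (z i - (1 - l) * w i) / l - z₀ i = (z i - ((1 - l) * w i + l * z₀ i)) / l := by
    field_simp; ring
  rw [this, abs_div, abs_of_pos hl0, div_le_iff₀ hl0]
  linarith [hwz i]

lemma slice_le {C B : Set ((Fin n → ℝ) × (Fin d → ℝ))} {z₀ : Fin n → ℝ} {k l : ℝ}
    (hbox : Metric.closedBall z₀ k ⊆ Prod.fst '' C) (hl0 : 0 < l) (hl : l < 1) (hk : 0 ≤ k)
    (hlk : l * k = 1 / 2) {A : Set ((Fin n → ℝ) × (Fin d → ℝ))}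
    (h : ∀ u ∈ A, ∀ p ∈ C, (1 - l) • u + l • p ∈ B) (w z : Fin n → ℝ)
    (hwz : ∀ i, |z i - ((1 - l) * w i + l * z₀ i)| ≤ 1 / 2) :
    ENNReal.ofReal ((1 - l) ^ d) * volume {x : Fin d → ℝ | (w, x) ∈ A} ≤
      volume {x : Fin d → ℝ | (z, x) ∈ B} := by
  have hb := box_mem hl0 hk hlk w z hwz
  obtain ⟨⟨b, s⟩, hbC, hbe⟩ := hbox hb
  simp only at hbe
  have := hom_le (F := Fin d → ℝ) volume hl (A := {x : Fin d → ℝ | (w, x) ∈ A})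
    (B := {x : Fin d → ℝ | (z, x) ∈ B}) (p := s) (by
      intro x hx
      have := h _ hx _ hbC
      simp only [mem_ofPred_eq]
      convert this using 1
      ext i
      · simp [hbe]; field_simp; ring
      · simp)
  simpa using this

lemma disc_lower {C B : Set ((Fin n → ℝ) × (Fin d → ℝ))} {z₀ : Fin n → ℝ} {k l : ℝ}
    (hbox : Metric.closedBall z₀ k ⊆ Prod.fst '' C) (hl0 : 0 < l) (hl : l < 1) (hk : 0 ≤ k)
    (hlk : l * k = 1 / 2) {A : Set ((Fin n → ℝ) × (Fin d → ℝ))} (hA : MeasurableSet A)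
    (h : ∀ u ∈ A, ∀ p ∈ C, (1 - l) • u + l • p ∈ B) :
    ENNReal.ofReal ((1 - l) ^ (n + d)) * volume A ≤ mixVol n d B := by
  have h1 : 0 < 1 - l := by linarith
  set W : (Fin n → ℤ) → Set (Fin n → ℝ) := fun z => Set.pi univ fun i =>
    Ico (((z i : ℝ) - 1 / 2 - l * z₀ i) / (1 - l)) (((z i : ℝ) + 1 / 2 - l * z₀ i) / (1 - l)) with hW
  have Wmem : ∀ z w, w ∈ W z ↔ ∀ i, (z i : ℝ) ≤ (1 - l) * w i + l * z₀ i + 1 / 2 ∧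
      (1 - l) * w i + l * z₀ i + 1 / 2 < z i + 1 := by
    intro z w
    simp only [hW, mem_pi, mem_univ, true_imp_iff, mem_Ico, div_le_iff₀ h1, lt_div_iff₀ h1]
    refine forall_congr' fun i => and_congr ?_ ?_ <;> constructor <;> intro <;> linarith
  have Wvol : ∀ z, ENNReal.ofReal ((1 - l) ^ n) * volume (W z) = 1 := by
    intro z
    rw [hW, Real.volume_pi_Ico]
    have : ∀ i, ((z i : ℝ) + 1 / 2 - l * z₀ i) / (1 - l) - ((z i : ℝ) - 1 / 2 - l * z₀ i) / (1 - l)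
        = (1 - l)⁻¹ := by intro i; field_simp; ring
    simp only [this, Finset.prod_const, Finset.card_univ, Fintype.card_fin]
    rw [← ENNReal.ofReal_pow (by positivity), ← ENNReal.ofReal_mul (by positivity), ← mul_pow,
      mul_inv_cancel₀ h1.ne']
    simp
  have Wm : ∀ z, MeasurableSet (W z) := fun z =>
    MeasurableSet.univ_pi fun i => measurableSet_Ico
  have Wfl : ∀ z w, w ∈ W z → z = fun i => ⌊(1 - l) * w i + l * z₀ i + 1 / 2⌋ := by
    intro z w hw
    ext i
    exact (Int.floor_eq_iff.2 ((Wmem z w).1 hw i)).symm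
  have Wd : Pairwise (Function.onFun Disjoint W) := by
    intro z z' hzz
    rw [Function.onFun, Set.disjoint_left]
    intro w h1 h2
    exact hzz ((Wfl z w h1).trans (Wfl z' w h2).symm)
  have Wc : ⋃ z, W z = univ := by
    refine eq_univ_of_forall fun w => mem_iUnion.2 ⟨fun i => ⌊(1 - l) * w i + l * z₀ i + 1 / 2⌋, ?_⟩
    rw [Wmem]
    intro i
    exact ⟨Int.floor_le _, Int.lt_floor_add_one _⟩
  rw [Measure.volume_eq_prod, Measure.prod_apply hA, ← setLIntegral_univ, ← Wc,
    lintegral_iUnion Wm Wd, mixVol, ← ENNReal.tsum_mul_left]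
  refine ENNReal.tsum_le_tsum fun z => ?_
  rw [pow_add, ENNReal.ofReal_mul (by positivity), mul_assoc,
    ← lintegral_const_mul' _ _ (by simp)]
  calc _ ≤ ENNReal.ofReal ((1 - l) ^ n) * ∫⁻ w in W z,
        volume {x : Fin d → ℝ | ((fun i => (z i : ℝ)), x) ∈ B} := by
        refine mul_le_mul' le_rfl ?_
        refine setLIntegral_mono measurable_const fun w hw => ?_
        refine slice_le hbox hl0 hl hk hlk h w _ fun i => ?_
        have := (Wmem z w).1 hw i
        rw [abs_le]; constructor <;> linarith
    _ = _ := by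
        rw [setLIntegral_const, mul_comm (volume _), ← mul_assoc, Wvol, one_mul]

lemma disc_upper {C : Set ((Fin n → ℝ) × (Fin d → ℝ))} {z₀ : Fin n → ℝ} {k l : ℝ}
    (hbox : Metric.closedBall z₀ k ⊆ Prod.fst '' C) (hl0 : 0 < l) (hl : l < 1) (hk : 0 ≤ k)
    (hlk : l * k = 1 / 2) (hC : MeasurableSet C) (hconv : Convex ℝ C) :
    ENNReal.ofReal ((1 - l) ^ (n + d)) * mixVol n d C ≤ volume C := by
  have h1 : 0 < 1 - l := by linarith
  set W : (Fin n → ℤ) → Set (Fin n → ℝ) := fun z => Set.pi univ fun i =>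
    Ico ((1 - l) * ((z i : ℝ) - 1 / 2) + l * z₀ i) ((1 - l) * ((z i : ℝ) + 1 / 2) + l * z₀ i) with hW
  have Wvol : ∀ z, volume (W z) = ENNReal.ofReal ((1 - l) ^ n) := by
    intro z
    rw [hW, Real.volume_pi_Ico]
    have : ∀ i, ((1 - l) * ((z i : ℝ) + 1 / 2) + l * z₀ i) - ((1 - l) * ((z i : ℝ) - 1 / 2) + l * z₀ i)
        = (1 - l) := by intro i; ring
    simp only [this, Finset.prod_const, Finset.card_univ, Fintype.card_fin]
    rw [← ENNReal.ofReal_pow (by positivity)]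
  have Wm : ∀ z, MeasurableSet (W z) := fun z =>
    MeasurableSet.univ_pi fun i => measurableSet_Ico
  have Wmem : ∀ z w, w ∈ W z → ∀ i, (1 - l) * ((z i : ℝ) - 1 / 2) + l * z₀ i ≤ w i ∧
      w i < (1 - l) * ((z i : ℝ) + 1 / 2) + l * z₀ i := by
    intro z w hw i
    exact hw i (mem_univ i)
  have Wfl : ∀ z w, w ∈ W z → z = fun i => ⌊(w i - l * z₀ i) / (1 - l) + 1 / 2⌋ := by
    intro z w hw
    ext i
    refine (Int.floor_eq_iff.2 ?_).symm
    have := Wmem z w hw i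
    rw [← sub_le_iff_le_add, le_div_iff₀ h1, ← lt_sub_iff_add_lt, div_lt_iff₀ h1]
    constructor <;> linarith
  have Wd : Pairwise (Function.onFun Disjoint W) := by
    intro z z' hzz
    rw [Function.onFun, Set.disjoint_left]
    intro w h1 h2
    exact hzz ((Wfl z w h1).trans (Wfl z' w h2).symm)
  rw [Measure.volume_eq_prod, Measure.prod_apply hC, mixVol, ← ENNReal.tsum_mul_left]
  refine le_trans ?_ (setLIntegral_le_lintegral (⋃ z, W z) _)
  rw [lintegral_iUnion Wm Wd]
  refine ENNReal.tsum_le_tsum fun z => ?_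
  calc _ = ∫⁻ w in W z, ENNReal.ofReal ((1 - l) ^ d) *
        volume {x : Fin d → ℝ | ((fun i => (z i : ℝ)), x) ∈ C} := by
        rw [setLIntegral_const, Wvol, pow_add, ENNReal.ofReal_mul (by positivity)]
        ring
    _ ≤ _ := by
        refine setLIntegral_mono (measurable_measure_prodMk_left hC) fun w hw => ?_
        refine slice_le hbox hl0 hl hk hlk
          (fun u hu p hp => hconv hu hp h1.le hl0.le (by ring)) _ w fun i => ?_
        have := Wmem z w hw i
        rw [abs_le]; constructor <;> nlinarith

end disc

/-- The pairing as a continuous linear map. -/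
noncomputable def dotL (n d : ℕ) (a : (Fin n → ℝ) × (Fin d → ℝ)) :
    ((Fin n → ℝ) × (Fin d → ℝ)) →L[ℝ] ℝ :=
  LinearMap.toContinuousLinearMap
    { toFun := dotP n d a
      map_add' := by
        intro x y; simp [dotP, mul_add, Finset.sum_add_distrib]; ring
      map_smul' := by
        intro r x; simp [dotP, mul_add, Finset.mul_sum, mul_left_comm] }

lemma dotL_apply (n d : ℕ) (a u : (Fin n → ℝ) × (Fin d → ℝ)) : dotL n d a u = dotP n d a u := rfl

lemma final_num {q V e A1 A2 A3 T M : ℝ} (hV : 0 < V) (he1 : 2.7 < e) (he2 : e < 2.72)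
    (hq : 1 - 1 / (6 * e) ≤ q) (hq1 : q ≤ 1) (h1 : V ≤ e * A1) (h2 : q * A1 ≤ A2)
    (h3 : q * (V - A3) ≤ V - A2) (h4 : q * A3 ≤ M) (h5 : q * T ≤ V) (hT : 0 ≤ T) :
    1 / (2 * e) * T ≤ M := by
  have he : 0 < e := by linarith
  have hq9 : 0.93 ≤ q := by
    have : 1 / (6 * e) ≤ 0.07 := by
      rw [div_le_iff₀ (by linarith)]; linarith
    linarith
  have hA1 : V / e ≤ A1 := by rw [div_le_iff₀ he]; linarith
  have hM : V * (q * (1 + 1 / e) - 1) ≤ M := by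
    have : q * (V / e) ≤ q * A1 := by gcongr
    have e1 : V * (q * (1 + 1 / e) - 1) = q * V + q * (V / e) - V := by field_simp
    rw [e1]; nlinarith
  refine le_trans ?_ hM
  have h6 : T ≤ V / q := by rw [le_div_iff₀ (by linarith)]; linarith
  have h7 : 1 / (2 * e) * T ≤ 1 / (2 * e) * (V / q) := by gcongr
  refine h7.trans ?_
  have e2 : 1 / (2 * e) * (V / q) = V * (1 / (2 * e) / q) := by field_simp
  rw [e2]
  gcongr
  rw [div_le_iff₀ (by linarith)]
  set y := 1 / e with hy
  have e3 : 1 / (2 * e) = y / 2 := by rw [hy]; field_simp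
  rw [e3]
  have y1 : 0.36 ≤ y := by rw [hy, le_div_iff₀ he]; linarith
  have hqq : 0.93 * q ≤ q * q := by gcongr
  nlinarith

/-- Oertel's conjecture under the linear-width hypothesis `k ≥ 3e(n+d)`: there is a point of
depth at least `H_d(S)/(2e) ≥ H_d(S)/(2ⁿ e)`. -/
theorem oertel_under_linear_width (n d : ℕ) (hn : 1 ≤ n) (hd : 1 ≤ d)
    (C : Set ((Fin n → ℝ) × (Fin d → ℝ)))
    (hconv : Convex ℝ C) (hcomp : IsCompact C) (hint : (interior C).Nonempty)
    (z₀ : Fin n → ℝ) (k : ℝ)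
    (hk : 3 * Real.exp 1 * (n + d) ≤ k)
    (hbox : Metric.closedBall z₀ k ⊆ Prod.fst '' C) :
    ∃ ystar ∈ C ∩ mixLattice n d,
      ∀ (a : (Fin n → ℝ) × (Fin d → ℝ)) (c : ℝ), a ≠ 0 → c ≤ dotP n d a ystar →
        ENNReal.ofReal (1 / (2 * Real.exp 1)) * mixVol n d (C ∩ mixLattice n d) ≤
          mixVol n d ((C ∩ mixLattice n d) ∩ {u | c ≤ dotP n d a u}) ∧
        ENNReal.ofReal (1 / (2 ^ n * Real.exp 1)) * mixVol n d (C ∩ mixLattice n d) ≤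
          ENNReal.ofReal (1 / (2 * Real.exp 1)) * mixVol n d (C ∩ mixLattice n d) := by
  have hmix : ∀ A : Set ((Fin n → ℝ) × (Fin d → ℝ)), mixVol n d (A ∩ mixLattice n d)
      = mixVol n d A := by
    intro A
    unfold mixVol
    congr 1
    ext z
    congr 1
    ext x
    exact ⟨fun h => h.1, fun h => ⟨h, z, rfl⟩⟩
  have he1 : (2.7 : ℝ) < Real.exp 1 := by linarith [Real.exp_one_gt_d9]
  have he2 : Real.exp 1 < (2.72 : ℝ) := by linarith [Real.exp_one_lt_d9]
  have hn' : (1 : ℝ) ≤ n := by exact_mod_cast hn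
  have hd' : (1 : ℝ) ≤ d := by exact_mod_cast hd
  have hk1 : 16 ≤ k := by nlinarith
  have hk0 : 0 < k := by linarith
  set l : ℝ := 1 / (2 * k) with hl
  have hl0 : 0 < l := by positivity
  have hl1 : l < 1 := by rw [hl, div_lt_one (by positivity)]; linarith
  have h1l : 0 < 1 - l := by linarith
  have hlk : l * k = 1 / 2 := by rw [hl]; field_simp
  have hCm : MeasurableSet C := hcomp.measurableSet
  have hHaar : (volume : Measure ((Fin n → ℝ) × (Fin d → ℝ))).IsAddHaarMeasure := by
    rw [Measure.volume_eq_prod]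
    have i1 : (volume : Measure (Fin n → ℝ)).IsAddHaarMeasure := inferInstance
    have i2 : (volume : Measure (Fin d → ℝ)).IsAddHaarMeasure := inferInstance
    exact Measure.prod.instIsAddHaarMeasure _ _
  have hV : volume C ≠ 0 := by
    refine ne_of_gt (lt_of_lt_of_le ?_ (measure_mono interior_subset))
    exact isOpen_interior.measure_pos _ hint
  have hVT : volume C ≠ ∞ := hcomp.measure_lt_top.ne
  obtain ⟨cen, hcen, hG⟩ := grunbaum_body (PL_prod (PL_pi n) (PL_pi d)) hconv hcomp hV
  set z : Fin n → ℤ := fun i => ⌊(1 - l) * cen.1 i + l * z₀ i + 1 / 2⌋ with hz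
  have hb := box_mem hl0 hk0.le hlk cen.1 (fun i => (z i : ℝ)) (z₀ := z₀) (by
    intro i
    have a1 := Int.floor_le ((1 - l) * cen.1 i + l * z₀ i + 1 / 2)
    have a2 := Int.lt_floor_add_one ((1 - l) * cen.1 i + l * z₀ i + 1 / 2)
    rw [abs_le]; constructor <;> simp only [hz] <;> linarith)
  obtain ⟨p, hpC, hpe⟩ := hbox hb
  have hyC : (1 - l) • cen + l • p ∈ C := hconv hcen hpC h1l.le hl0.le (by ring)
  refine ⟨(1 - l) • cen + l • p, ⟨hyC, z, ?_⟩, ?_⟩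
  · ext i
    simp [hpe]; field_simp; ring
  intro a c _ hc
  constructor
  swap
  · gcongr
    calc (2 : ℝ) = 2 ^ 1 := by norm_num
      _ ≤ 2 ^ n := by gcongr; norm_num
  set y := (1 - l) • cen + l • p with hy
  have e1 : (C ∩ mixLattice n d) ∩ {u | c ≤ dotP n d a u}
      = (C ∩ {u | c ≤ dotP n d a u}) ∩ mixLattice n d := by
    ext u; simp only [mem_inter_iff]; tauto
  rw [e1, hmix, hmix]
  set L := dotL n d a with hL
  have hLd : ∀ u, dotP n d a u = L u := fun u => rfl
  simp only [hLd] at hc ⊢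
  obtain ⟨u₀, hu₀, hmin⟩ := hcomp.exists_isMinOn ⟨y, hyC⟩ L.continuous.continuousOn
  have hmin : ∀ u ∈ C, L u₀ ≤ L u := fun u hu => hmin hu
  set c' : ℝ := (L y - l * L u₀) / (1 - l) with hc'
  have hc'e : (1 - l) * c' = L y - l * L u₀ := by rw [hc']; field_simp
  have fr : Module.finrank ℝ ((Fin n → ℝ) × (Fin d → ℝ)) = n + d := by simp
  set q := (1 - l) ^ (n + d) with hq
  have q0 : 0 < q := by positivity
  have hLm : Measurable L := L.continuous.measurable
  have s1 : ENNReal.ofReal q * volume (C ∩ {u | L cen ≤ L u}) ≤ volume (C ∩ {u | L y ≤ L u}) := by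
    rw [hq, ← fr]
    refine hom_le volume hl1 (p := p) ?_
    rintro u ⟨hu, hu2⟩
    refine ⟨hconv hu hpC h1l.le hl0.le (by ring), ?_⟩
    have hu2 : L cen ≤ L u := hu2
    change L y ≤ L _
    simp only [hy, map_add, map_smul, smul_eq_mul]
    gcongr
  have s2 : ENNReal.ofReal q * volume (C \ {u | c' ≤ L u}) ≤ volume (C \ {u | L y ≤ L u}) := by
    rw [hq, ← fr]
    refine hom_le volume hl1 (p := u₀) ?_
    rintro u ⟨hu, hu2⟩
    refine ⟨hconv hu hu₀ h1l.le hl0.le (by ring), ?_⟩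
    have hu2 : L u < c' := not_le.1 hu2
    change ¬ (L y ≤ L _)
    rw [not_le]
    simp only [map_add, map_smul, smul_eq_mul]
    have : (1 - l) * L u < (1 - l) * c' := by gcongr
    linarith
  have s3 : ENNReal.ofReal q * volume (C ∩ {u | c' ≤ L u}) ≤ mixVol n d (C ∩ {u | c ≤ L u}) := by
    refine disc_lower hbox hl0 hl1 hk0.le hlk (hCm.inter (measurableSet_le measurable_const hLm)) ?_
    rintro u ⟨hu, hu2⟩ v hv
    refine ⟨hconv hu hv h1l.le hl0.le (by ring), ?_⟩
    have hu2 : c' ≤ L u := hu2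
    change c ≤ L _
    simp only [map_add, map_smul, smul_eq_mul]
    have t1 : (1 - l) * c' ≤ (1 - l) * L u := by gcongr
    have t2 : l * L u₀ ≤ l * L v := by gcongr; exact hmin v hv
    linarith
  have s4 := disc_upper hbox hl0 hl1 hk0.le hlk hCm hconv
  rw [← hq] at s4
  have hTT : mixVol n d C ≠ ∞ := by
    intro h
    rw [h, ENNReal.mul_top (by simpa using q0)] at s4
    exact hVT (top_le_iff.1 s4)
  have hmono : mixVol n d (C ∩ {u | c ≤ L u}) ≤ mixVol n d C :=
    ENNReal.tsum_le_tsum fun z => measure_mono fun x hx => hx.1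
  have hMT := ne_top_of_le_ne_top hTT hmono
  have fin : ∀ A : Set ((Fin n → ℝ) × (Fin d → ℝ)), volume (C ∩ A) ≠ ∞ := fun A =>
    ne_top_of_le_ne_top hVT (measure_mono inter_subset_left)
  have find : ∀ A : Set ((Fin n → ℝ) × (Fin d → ℝ)), volume (C \ A) ≠ ∞ := fun A =>
    ne_top_of_le_ne_top hVT (measure_mono sdiff_subset)
  have r1 := ENNReal.toReal_mono (fin _) s1
  have r2 := ENNReal.toReal_mono (find _) s2
  have r3 := ENNReal.toReal_mono hMT s3
  have r4 := ENNReal.toReal_mono hVT s4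
  simp only [ENNReal.toReal_mul, ENNReal.toReal_ofReal q0.le, ← measureReal_def] at r1 r2 r3 r4
  have d1 : ∀ r : ℝ, volume.real (C \ {u | r ≤ L u})
      = volume.real C - volume.real (C ∩ {u | r ≤ L u}) := by
    intro r
    have := measureReal_inter_add_sdiff (μ := volume) (s := C) (t := {u | r ≤ L u})
      (measurableSet_le measurable_const hLm) hVT
    linarith
  rw [d1, d1] at r2
  have V0 : 0 < volume.real C := by
    rw [measureReal_def]; exact ENNReal.toReal_pos hV hVT
  have hqb : 1 - 1 / (6 * Real.exp 1) ≤ q := by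
    have b := one_add_mul_le_pow (a := -l) (by linarith) (n + d)
    have : (1 + -l) = 1 - l := by ring
    rw [this] at b
    refine le_trans ?_ b
    have : ((n : ℝ) + d) * l ≤ 1 / (6 * Real.exp 1) := by
      rw [hl, mul_one_div, div_le_div_iff₀ (by positivity) (by positivity)]
      linarith
    push_cast
    linarith
  have hq1 : q ≤ 1 := pow_le_one₀ h1l.le (by linarith)
  have g := hG L
  rw [Real.exp_neg] at g
  have g' : volume.real C ≤ Real.exp 1 * volume.real (C ∩ {u | L cen ≤ L u}) := by
    rwa [inv_mul_le_iff₀ (Real.exp_pos 1)] at g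
  have fin := final_num (T := (mixVol n d C).toReal) V0 he1 he2 hqb hq1 g' r1 r2 r3 r4
    ENNReal.toReal_nonneg
  rw [← ENNReal.ofReal_toReal hTT, ← ENNReal.ofReal_mul (by positivity)]
  exact ENNReal.ofReal_le_of_le_toReal fin
end
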